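/- arXiv:2206.10123 — 5 statements merged into one kernel-verified Lean document; each statement's English description precedes it below -/
import Mathlib

section
/- Let X and Y be finite nonempty alphabets, P_X a probability mass function on X with P_X(x) > 0 for all x, and W a channel with W(y|x) > 0 for all x, y and Σ_y W(y|x) = 1 for each x. Let U : X×Y → (0,∞) be a decoding metric and for θ ≥ 0 set U_θ(x|y) = U(x,y)^θ / Σ_{x'} U(x',y)^θ. Define E_r(R,U) = max_{ρ∈[0,1]} sup_{θ≥0} { −Σ_x P_X(x) log₂( Σ_y W(y|x) / U_θ(x|y)^ρ ) + ρ(H(P_X) − R) }. Suppose |X| = 2^m and fix a bijection φ : {0,1}^m → X, extended componentwise to a bijection Φ : {0,1}^{nm} → X^n. Fix r_fec ∈ (0,1] and set R = H(P_X) − m(1 − r_fec). Assume P_X has rational entries, and consider blocklengths n along which n·P_X(x) ∈ ℤ for all x; let T_n(P_X) ⊆ X^n be the type class of sequences with empirical distribution P_X, and let (k_n) be integers with k_n/(nm) → r_fec. For each such n, let G be uniformly distributed on the k_n×(nm) matrices over GF(2) and v uniformly distributed on {0,1}^{nm}, independent of G, and set c(w) = wG ⊕ v for w ∈ {0,1}^{k_n}.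 Fix any message w and any x_n ∈ T_n(P_X), and define the ensemble-average error probability P̄_e(n) = Σ_{y∈Y^n} ∏_i W(y_i | (x_n)_i) · Pr( ∃ w' ≠ w : ∏_i U( Φ(c(w'))_i , y_i ) ≥ ∏_i U( (x_n)_i , y_i ) | Φ(c(w)) = x_n ). Then lim_{n→∞} −(1/n) log₂ P̄_e(n) = E_r(R,U). -/
/-- Base-2 entropy of a probability mass function on a finite alphabet. -/
noncomputable def entropy2 {X : Type*} [Fintype X] (P : X → ℝ) : ℝ :=
  -∑ x, P x * Real.logb 2 (P x)

/-- The normalized metric `U_θ(x|y) = U(x,y)^θ / Σ_{x'} U(x',y)^θ`. -/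
noncomputable def Utheta {X Y : Type*} [Fintype X] (U : X → Y → ℝ) (θ : ℝ)
    (x : X) (y : Y) : ℝ :=
  U x y ^ θ / ∑ x', U x' y ^ θ


lemma aux_dual {k : ℕ} (u v : Fin k → ZMod 2) (hu : u ≠ 0) (huv : u ≠ v) :
    ∃ a : Fin k → ZMod 2, u ⬝ᵥ a = 1 ∧ v ⬝ᵥ a = 0 := by
  have two : ∀ t : ZMod 2, t = 0 ∨ t = 1 := by decide
  by_cases h : ∃ i, u i = 1 ∧ v i = 0
  · obtain ⟨i, h1, h2⟩ := h
    exact ⟨Pi.single i 1, by simp [h1], by simp [h2]⟩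
  · push Not at h
    obtain ⟨i, hi⟩ := Function.ne_iff.mp hu
    have hi1 : u i = 1 := (two (u i)).resolve_left hi
    have hvi : v i = 1 := (two (v i)).resolve_left (h i hi1)
    obtain ⟨j, hj⟩ := Function.ne_iff.mp huv
    have huj : u j = 0 := by
      rcases two (u j) with h0 | h1
      · exact h0
      · have := (two (v j)).resolve_left (h j h1)
        exact absurd (h1.trans this.symm) hj
    have hvj : v j = 1 := by
      rcases two (v j) with h0 | h1
      · exact absurd (huj.trans h0.symm) hj
      · exact h1
    refine ⟨Pi.single i 1 + Pi.single j 1, ?_, ?_⟩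
    · simp [dotProduct_add, hi1, huj]
    · simp [dotProduct_add, hvi, hvj]; decide

lemma aux_fiber {A B : Type*} [AddCommGroup A] [AddCommGroup B] [Fintype A] [Fintype B]
    [DecidableEq A] [DecidableEq B] (f : A →+ B) (hf : Function.Surjective f) (S : Finset B) :
    ((Finset.univ.filter fun a => f a ∈ S).card : ℝ) =
      (Fintype.card A : ℝ) * (S.card / Fintype.card B) := by
  have hconst : ∀ b, (Finset.univ.filter fun a => f a = b).card =
      (Finset.univ.filter fun a => f a = 0).card := by
    intro b
    have := AddMonoidHom.card_fiber_eq_of_mem_range f (x := b) (y := 0) (by simpa using hf b)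
      (by simpa using hf 0)
    simpa using this
  have h1 : ∀ S : Finset B, (Finset.univ.filter fun a => f a ∈ S).card =
      S.card * (Finset.univ.filter fun a => f a = 0).card := by
    intro S
    rw [Finset.card_eq_sum_card_fiberwise (f := f) (t := S)]
    · rw [Finset.sum_congr rfl (g := fun _ => (Finset.univ.filter fun a => f a = 0).card)]
      · simp
      · intro b hb
        rw [← hconst b]
        congr 1
        ext a
        simp
        rintro rfl; exact hb
    · intro a ha; simpa using ha
  have h2 := h1 Finset.univ
  have hA : Fintype.card A = Fintype.card B * (Finset.univ.filter fun a => f a = 0).card := by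
    simpa using h2
  have hB : (Fintype.card B : ℝ) ≠ 0 := by
    have : 0 < Fintype.card B := Fintype.card_pos
    positivity
  rw [h1 S, hA]
  push_cast
  field_simp

lemma aux_one {k : ℕ} {ι : Type*} [Fintype ι] [DecidableEq ι]
    (A : Finset (ι → ZMod 2)) (u : Fin k → ZMod 2) (hu : u ≠ 0) :
    ((Finset.univ.filter fun G : Matrix (Fin k) ι (ZMod 2) => Matrix.vecMul u G ∈ A).card : ℝ) =
      (Fintype.card (Matrix (Fin k) ι (ZMod 2)) : ℝ) * (A.card / 2 ^ Fintype.card ι) := by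
  let f : Matrix (Fin k) ι (ZMod 2) →+ (ι → ZMod 2) :=
    { toFun := fun G => Matrix.vecMul u G
      map_zero' := by simp
      map_add' := fun x y => Matrix.vecMul_add _ _ _ }
  have hf : Function.Surjective f := by
    intro z
    obtain ⟨a, ha, -⟩ := aux_dual u 0 hu hu
    refine ⟨Matrix.vecMulVec a z, ?_⟩
    show Matrix.vecMul u (Matrix.vecMulVec a z) = z
    rw [Matrix.vecMul_vecMulVec, ha]; simp
  have := aux_fiber f hf A
  have h2 : ∀ G, (f G ∈ A) ↔ (Matrix.vecMul u G ∈ A) := fun G => Iff.rfl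
  simp only [h2] at this
  rw [this]
  simp

lemma aux_two {k : ℕ} {ι : Type*} [Fintype ι] [DecidableEq ι]
    (A : Finset (ι → ZMod 2)) (u v : Fin k → ZMod 2) (hu : u ≠ 0) (hv : v ≠ 0) (huv : u ≠ v) :
    ((Finset.univ.filter fun G : Matrix (Fin k) ι (ZMod 2) =>
        Matrix.vecMul u G ∈ A ∧ Matrix.vecMul v G ∈ A).card : ℝ) =
      (Fintype.card (Matrix (Fin k) ι (ZMod 2)) : ℝ) * (A.card / 2 ^ Fintype.card ι) ^ 2 := by
  let f : Matrix (Fin k) ι (ZMod 2) →+ (ι → ZMod 2) × (ι → ZMod 2) :=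
    { toFun := fun G => (Matrix.vecMul u G, Matrix.vecMul v G)
      map_zero' := by simp
      map_add' := fun x y => by simp [Matrix.vecMul_add] }
  have hf : Function.Surjective f := by
    rintro ⟨z1, z2⟩
    obtain ⟨a, ha, ha'⟩ := aux_dual u v hu huv
    obtain ⟨b, hb, hb'⟩ := aux_dual v u hv huv.symm
    refine ⟨Matrix.vecMulVec a z1 + Matrix.vecMulVec b z2, ?_⟩
    show (Matrix.vecMul u _, Matrix.vecMul v _) = _
    simp [Matrix.vecMul_add, Matrix.vecMul_vecMulVec, ha, ha', hb, hb']
  have := aux_fiber f hf (A ×ˢ A)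
  have h2 : ∀ G, (f G ∈ A ×ˢ A) ↔ (Matrix.vecMul u G ∈ A ∧ Matrix.vecMul v G ∈ A) := by
    intro G; simp [f]
  simp only [h2] at this
  rw [this]
  simp
  field_simp

lemma ratio_bounds {k : ℕ} {ι : Type*} [Fintype ι] [DecidableEq ι]
    (A : Finset (ι → ZMod 2)) (E T M p : ℝ)
    (hE : E = ((Finset.univ.filter fun G : Matrix (Fin k) ι (ZMod 2) =>
      ∃ u : Fin k → ZMod 2, u ≠ 0 ∧ Matrix.vecMul u G ∈ A).card : ℝ))
    (hT : T = (Fintype.card (Matrix (Fin k) ι (ZMod 2)) : ℝ))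
    (hM : M = 2 ^ k - 1) (hp : p = A.card / 2 ^ Fintype.card ι) :
    E / T ≤ min 1 (M * p) ∧ min 1 (M * p) / 2 ≤ E / T := by
  classical
  have hTpos : 0 < T := by
    rw [hT]; have : 0 < Fintype.card (Matrix (Fin k) ι (ZMod 2)) := Fintype.card_pos
    positivity
  have hp0 : 0 ≤ p := by rw [hp]; positivity
  have hM0 : 0 ≤ M := by rw [hM]; linarith [one_le_pow₀ (M₀ := ℝ) (n := k) one_le_two]
  set D : Finset (Fin k → ZMod 2) := Finset.univ.filter (fun u => u ≠ 0) with hD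
  have hDc : (D.card : ℝ) = M := by
    rw [hM, hD, Finset.filter_ne', Finset.card_erase_of_mem (Finset.mem_univ _)]
    rw [Nat.cast_sub (by simp [Nat.one_le_iff_ne_zero])]
    simp
  let I : (Fin k → ZMod 2) → Matrix (Fin k) ι (ZMod 2) → ℝ :=
    fun u G => if Matrix.vecMul u G ∈ A then 1 else 0
  let N : Matrix (Fin k) ι (ZMod 2) → ℝ := fun G => ∑ u ∈ D, I u G
  let J : Matrix (Fin k) ι (ZMod 2) → ℝ := fun G =>
    if ∃ u : Fin k → ZMod 2, u ≠ 0 ∧ Matrix.vecMul u G ∈ A then 1 else 0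
  have hEJ : E = ∑ G, J G := by
    rw [hE]; simp [J]
  have hI0 : ∀ u G, 0 ≤ I u G := by intro u G; simp only [I]; split_ifs <;> norm_num
  have hN0 : ∀ G, 0 ≤ N G := fun G => Finset.sum_nonneg fun u _ => hI0 u G
  have hI1 : ∀ u ∈ D, ∑ G, I u G = T * p := by
    intro u hu
    have := aux_one A u (by simpa [hD] using hu)
    rw [hT, hp, ← this]; simp [I]
  have hI2 : ∀ u ∈ D, ∀ v ∈ D, ∑ G, I u G * I v G = if u = v then T * p else T * p ^ 2 := by
    intro u hu v hv
    split_ifs with h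
    · subst h
      rw [← hI1 u hu]
      refine Finset.sum_congr rfl fun G _ => ?_
      simp only [I]; split_ifs <;> norm_num
    · have := aux_two A u v (by simpa [hD] using hu) (by simpa [hD] using hv) h
      rw [hT, hp, ← this, Finset.card_filter]
      push_cast
      refine Finset.sum_congr rfl fun G _ => ?_
      simp only [I]
      by_cases h1 : Matrix.vecMul u G ∈ A <;> by_cases h2 : Matrix.vecMul v G ∈ A <;> simp [h1, h2]
  have hNsum : ∑ G, N G = T * (M * p) := by
    simp only [N]
    rw [Finset.sum_comm, Finset.sum_congr rfl hI1]
    simp [hDc]; ring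
  have hN2 : ∑ G, N G ^ 2 ≤ T * (M * p + (M * p) ^ 2) := by
    have : ∑ G, N G ^ 2 = ∑ u ∈ D, ∑ v ∈ D, if u = v then T * p else T * p ^ 2 := by
      calc ∑ G, N G ^ 2 = ∑ G, ∑ u ∈ D, ∑ v ∈ D, I u G * I v G := by
            refine Finset.sum_congr rfl fun G _ => ?_
            simp only [N]; rw [sq, Finset.sum_mul_sum]
        _ = ∑ u ∈ D, ∑ v ∈ D, ∑ G, I u G * I v G := by
            rw [Finset.sum_comm]
            refine Finset.sum_congr rfl fun u _ => ?_
            rw [Finset.sum_comm]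
        _ = _ := Finset.sum_congr rfl fun u hu => Finset.sum_congr rfl fun v hv => hI2 u hu v hv
    rw [this]
    calc _ ≤ ∑ u ∈ D, ∑ v ∈ D, ((if u = v then T * p else 0) + T * p ^ 2) := by
          refine Finset.sum_le_sum fun u _ => Finset.sum_le_sum fun v _ => ?_
          split_ifs
          · have : 0 ≤ T * p ^ 2 := by positivity
            linarith
          · simp
      _ = ∑ u ∈ D, (T * p + M * (T * p ^ 2)) := by
          refine Finset.sum_congr rfl fun u hu => ?_
          rw [Finset.sum_add_distrib, Finset.sum_ite_eq]; simp [hu, hDc]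
      _ = _ := by simp [hDc]; ring
  have hJN : ∀ G, J G ≤ N G := by
    intro G
    simp only [J]
    split_ifs with h
    · obtain ⟨u, hu, hA⟩ := h
      calc (1:ℝ) = I u G := by simp [I, hA]
        _ ≤ N G := Finset.single_le_sum (f := fun u => I u G) (fun v _ => hI0 v G) (by simp [hD, hu])
    · exact hN0 G
  have hJ1 : ∀ G, J G ≤ 1 := by intro G; simp only [J]; split_ifs <;> norm_num
  have hNJ : ∀ G, N G = J G * N G := by
    intro G
    simp only [J]
    split_ifs with h
    · simp
    · rw [zero_mul]
      push Not at h
      refine Finset.sum_eq_zero fun u hu => ?_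
      simp [I, h u (by simpa [hD] using hu)]
  have hJJ : ∀ G, J G ^ 2 = J G := by intro G; simp only [J]; split_ifs <;> norm_num
  have hCS : (T * (M * p)) ^ 2 ≤ E * (T * (M * p + (M * p) ^ 2)) := by
    have h := Finset.sum_mul_sq_le_sq_mul_sq Finset.univ J N
    simp only [← hNJ, hNsum, hJJ, ← hEJ] at h
    have hE0 : 0 ≤ E := by rw [hE]; exact Nat.cast_nonneg _
    exact h.trans (mul_le_mul_of_nonneg_left hN2 hE0)
  constructor
  · rw [div_le_iff₀ hTpos]
    rcases min_cases (1:ℝ) (M * p) with h | h <;> rw [h.1]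
    · rw [hEJ, one_mul, hT]
      calc ∑ G, J G ≤ ∑ G : Matrix (Fin k) ι (ZMod 2), (1:ℝ) := Finset.sum_le_sum fun G _ => hJ1 G
        _ = _ := by simp
    · rw [hEJ, mul_comm, ← hNsum]
      exact Finset.sum_le_sum fun G _ => hJN G
  · rw [le_div_iff₀ hTpos]
    set q := M * p with hq
    have hq0 : 0 ≤ q := mul_nonneg hM0 hp0
    rcases hq0.eq_or_lt with h0 | h0
    · rw [← h0]; simp; rw [hE]; exact Nat.cast_nonneg _
    · have h3 : T * q ≤ E * (1 + q) := by
        have : (T * q) * (T * q) ≤ (E * (1 + q)) * (T * q) := by nlinarith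
        exact le_of_mul_le_mul_right this (by positivity)
      rcases min_cases (1:ℝ) q with h | h <;> rw [h.1]
      · have : T * (1 + q) ≤ 2 * E * (1 + q) := by nlinarith
        have := le_of_mul_le_mul_right this (by positivity)
        linarith
      · have hE0 : 0 ≤ E := by rw [hE]; exact Nat.cast_nonneg _
        nlinarith

lemma cond_bounds {X : Type*} [Fintype X] [DecidableEq X] (m n k : ℕ) 
    (φ : (Fin m → ZMod 2) → X) (hφ : Function.Bijective φ)
    (x : Fin n → X) (w : Fin k → ZMod 2) (B : (Fin n → X) → Prop) [DecidablePred B]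
    (M p C : ℝ) (hM : M = 2 ^ k - 1)
    (hp : p = (Finset.univ.filter B).card / 2 ^ (n * m))
    (hC : C = ((Nat.card {ω : Matrix (Fin k) (Fin n × Fin m) (ZMod 2) ×
                ((Fin n × Fin m) → ZMod 2) //
              (∃ w', w' ≠ w ∧ B (fun i => φ fun j => (Matrix.vecMul w' ω.1 + ω.2) (i, j))) ∧
              (fun i : Fin n => φ fun j => (Matrix.vecMul w ω.1 + ω.2) (i, j)) = x} : ℝ) /
            (Nat.card {ω : Matrix (Fin k) (Fin n × Fin m) (ZMod 2) ×
                ((Fin n × Fin m) → ZMod 2) //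
              (fun i : Fin n => φ fun j => (Matrix.vecMul w ω.1 + ω.2) (i, j)) = x} : ℝ))) :
    C ≤ min 1 (M * p) ∧ min 1 (M * p) / 2 ≤ C := by
  classical
  let Φ : ((Fin n × Fin m) → ZMod 2) → (Fin n → X) := fun z i => φ fun j => z (i, j)
  have hΦ : Function.Bijective Φ := by
    constructor
    · intro a b h
      ext ⟨i, j⟩
      have := hφ.1 (congrFun h i)
      exact congrFun this j
    · intro y
      choose g hg using hφ.2
      exact ⟨fun ij => g (y ij.1) ij.2, by ext i; exact hg (y i)⟩
  obtain ⟨b, hb⟩ := hΦ.2 x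
  let A : Finset ((Fin n × Fin m) → ZMod 2) := Finset.univ.filter fun z => B (Φ (z + b))
  have hAc : A.card = (Finset.univ.filter B).card := by
    refine Finset.card_bij (fun z _ => Φ (z + b)) ?_ ?_ ?_
    · intro z hz; simpa [A] using hz
    · intro z _ z' _ h; simpa using hΦ.1 h
    · intro y hy
      obtain ⟨z, hz⟩ := hΦ.2 y
      exact ⟨z - b, by simpa [A, hz] using hy, by simp [hz]⟩
  have hmain : ∀ G v, Matrix.vecMul w G + v = b → ∀ w' : Fin k → ZMod 2, 
      Matrix.vecMul w' G + v = Matrix.vecMul (w' - w) G + b := by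
    intro G v h w'
    rw [← h, Matrix.sub_vecMul]; abel
  have hx : ∀ z, (fun i : Fin n => φ fun j => z (i, j)) = x ↔ z = b := by
    intro z
    constructor
    · intro h; exact hΦ.1 (h.trans hb.symm)
    · rintro rfl; exact hb
  have hden : Nat.card {ω : Matrix (Fin k) (Fin n × Fin m) (ZMod 2) ×
                ((Fin n × Fin m) → ZMod 2) //
              (fun i : Fin n => φ fun j => (Matrix.vecMul w ω.1 + ω.2) (i, j)) = x} =
      Fintype.card (Matrix (Fin k) (Fin n × Fin m) (ZMod 2)) := by
    rw [← Nat.card_eq_fintype_card]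
    refine Nat.card_congr 
      { toFun := fun ω => ω.1.1
        invFun := fun G => ⟨(G, b - Matrix.vecMul w G), by rw [hx]; simp⟩
        left_inv := ?_
        right_inv := fun G => rfl }
    rintro ⟨⟨G, v⟩, h⟩
    rw [hx] at h
    simp only [Subtype.mk.injEq, Prod.mk.injEq, true_and]
    rw [← h]; simp
  have hnum : Nat.card {ω : Matrix (Fin k) (Fin n × Fin m) (ZMod 2) ×
                ((Fin n × Fin m) → ZMod 2) //
              (∃ w', w' ≠ w ∧ B (fun i => φ fun j => (Matrix.vecMul w' ω.1 + ω.2) (i, j))) ∧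
              (fun i : Fin n => φ fun j => (Matrix.vecMul w ω.1 + ω.2) (i, j)) = x} =
      (Finset.univ.filter fun G : Matrix (Fin k) (Fin n × Fin m) (ZMod 2) =>
      ∃ u : Fin k → ZMod 2, u ≠ 0 ∧ Matrix.vecMul u G ∈ A).card := by
    rw [← Fintype.card_subtype, ← Nat.card_eq_fintype_card]
    have key : ∀ G v, Matrix.vecMul w G + v = b → 
      ((∃ w', w' ≠ w ∧ B (fun i => φ fun j => (Matrix.vecMul w' G + v) (i, j))) ↔ 
        ∃ u : Fin k → ZMod 2, u ≠ 0 ∧ Matrix.vecMul u G ∈ A) := by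
      intro G v h
      constructor
      · rintro ⟨w', hw, hB⟩
        refine ⟨w' - w, sub_ne_zero.mpr hw, ?_⟩
        rw [hmain G v h] at hB
        exact Finset.mem_filter.mpr ⟨Finset.mem_univ _, hB⟩
      · rintro ⟨u, hu, hA⟩
        refine ⟨u + w, by simpa using hu, ?_⟩
        rw [hmain G v h, add_sub_cancel_right]
        exact (Finset.mem_filter.mp hA).2
    refine Nat.card_congr 
      { toFun := fun ω => ⟨ω.1.1, (key _ _ ((hx _).mp ω.2.2)).mp ω.2.1⟩
        invFun := fun G => ⟨(G.1, b - Matrix.vecMul w G.1), 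
          (key _ _ (by simp)).mpr G.2, by rw [hx]; simp⟩
        left_inv := ?_
        right_inv := fun G => rfl }
    rintro ⟨⟨G, v⟩, h', h⟩
    rw [hx] at h
    simp only [Subtype.mk.injEq, Prod.mk.injEq, true_and]
    rw [← h]; simp
  have := ratio_bounds (k := k) A _ _ M p rfl rfl hM (by rw [hp, hAc]; simp)
  rw [hC, hden, hnum]
  exact this

/-- `x` has exact type `P`. -/
def HasType {X : Type*} [DecidableEq X] (P : X → ℝ) {n : ℕ} (x : Fin n → X) : Prop :=
  ∀ a : X, (((Finset.univ.filter fun i : Fin n => x i = a).card : ℝ)) = n * P a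

lemma type_sum {X : Type*} [Fintype X] [DecidableEq X] (P : X → ℝ) {n : ℕ} (x : Fin n → X)
    (h : HasType P x) (g : X → ℝ) : ∑ i, g (x i) = n * ∑ a, P a * g a := by
  rw [← Finset.sum_fiberwise (s := Finset.univ) (g := x)]
  rw [Finset.mul_sum]
  refine Finset.sum_congr rfl fun a _ => ?_
  rw [← mul_assoc, ← h a, ← nsmul_eq_mul, ← Finset.sum_const]
  refine Finset.sum_congr rfl fun i hi => ?_
  rw [(Finset.mem_filter.mp hi).2]

lemma type_prod {X : Type*} [Fintype X] [DecidableEq X] (P : X → ℝ) {n : ℕ} (x : Fin n → X)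
    (h : HasType P x) (g : X → ℝ) (hg : ∀ a, 0 < g a) :
    ∏ i, g (x i) = Real.exp (n * ∑ a, P a * Real.log (g a)) := by
  rw [← type_sum P x h (fun a => Real.log (g a)), Real.exp_sum]
  exact Finset.prod_congr rfl fun i _ => (Real.exp_log (hg _)).symm

lemma sum_prod_pi {n : ℕ} {Z : Type*} [Fintype Z] (f : Fin n → Z → ℝ) :
    ∑ z : Fin n → Z, ∏ i, f i (z i) = ∏ i, ∑ a, f i a := by
  classical
  rw [Finset.prod_univ_sum]; simp

lemma lln {X Z : Type*} [Fintype X] [Fintype Z] [DecidableEq X] [Nonempty Z] 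
    (P : X → ℝ) (κ h : X → Z → ℝ) (hκ : ∀ a z, 0 < κ a z) (hκ1 : ∀ a, ∑ z, κ a z = 1)
    (hmean : ∑ a, P a * ∑ z, κ a z * h a z < 0) :
    ∃ r : ℝ, 0 ≤ r ∧ r < 1 ∧ ∀ (n : ℕ) (x : Fin n → X), HasType P x →
      ∑ z : Fin n → Z, (∏ i, κ (x i) (z i)) * (if 0 ≤ ∑ i, h (x i) (z i) then 1 else 0) ≤ r ^ n := by
  let Λ : ℝ → ℝ := fun s => ∑ a, P a * Real.log (∑ z, κ a z * Real.exp (s * h a z))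
  have hpos : ∀ s a, 0 < ∑ z, κ a z * Real.exp (s * h a z) := fun s a =>
    Finset.sum_pos (fun z _ => mul_pos (hκ a z) (Real.exp_pos _)) Finset.univ_nonempty
  have hder : HasDerivAt Λ (∑ a, P a * ∑ z, κ a z * h a z) 0 := by
    have : HasDerivAt Λ (∑ a, P a * ((∑ z, κ a z * (Real.exp (0 * h a z) * (1 * h a z))) /
        (∑ z, κ a z * Real.exp (0 * h a z)))) 0 := by
      refine HasDerivAt.fun_sum fun a _ => ?_
      refine HasDerivAt.const_mul _ ?_
      refine HasDerivAt.log ?_ (hpos 0 a).ne'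
      refine HasDerivAt.fun_sum fun z _ => ?_
      refine HasDerivAt.const_mul _ ?_
      exact ((hasDerivAt_id (0:ℝ)).mul_const (h a z)).exp
    simpa [hκ1] using this
  have h0 : Λ 0 = 0 := by simp [Λ, hκ1]
  obtain ⟨s, hs0, hs⟩ : ∃ s, 0 < s ∧ Λ s < 0 := by
    have h1 := hder.tendsto_slope_zero_right
    have h2 := (h1.eventually (gt_mem_nhds hmean)).and self_mem_nhdsWithin
    obtain ⟨s, hs, hs0⟩ := h2.exists
    have hs0' : (0:ℝ) < s := hs0
    refine ⟨s, hs0', ?_⟩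
    simp only [zero_add, h0, sub_zero, smul_eq_mul] at hs
    by_contra hcon
    push Not at hcon
    have : 0 ≤ s⁻¹ * Λ s := by positivity
    linarith
  refine ⟨Real.exp (Λ s), (Real.exp_pos _).le, by simpa using hs, fun n x hx => ?_⟩
  rw [← Real.exp_nat_mul]
  simp only [Λ]
  rw [← type_prod P x hx _ (hpos s), ← sum_prod_pi (fun i z => κ (x i) z * Real.exp (s * h (x i) z))]
  refine Finset.sum_le_sum fun z _ => ?_
  rw [Finset.prod_mul_distrib]
  refine mul_le_mul_of_nonneg_left ?_ (Finset.prod_nonneg fun i _ => (hκ _ _).le)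
  rw [← Real.exp_sum, ← Finset.mul_sum]
  split_ifs with hh
  · exact Real.one_le_exp (by positivity)
  · exact (Real.exp_pos _).le

/-- the essential quantity: `∑_y W^n(y|x) min(1, M p(y))` -/
noncomputable def Ess {X Y : Type*} [Fintype X] [Fintype Y] (W U : X → Y → ℝ) (K : ℝ)
    {n : ℕ} (x : Fin n → X) : ℝ :=
  open Classical in
  ∑ y : Fin n → Y, (∏ i, W (x i) (y i)) * min 1 (K *
    ((Finset.univ.filter fun x' : Fin n → X => 
      ∏ i, U (x i) (y i) ≤ ∏ i, U (x' i) (y i)).card : ℝ))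

lemma achiev {X Y : Type*} [Fintype X] [Fintype Y] [DecidableEq X] [Nonempty X] [Nonempty Y]
    (P : X → ℝ) (W U : X → Y → ℝ)
    (hW : ∀ x y, 0 < W x y) (hU : ∀ x y, 0 < U x y) (K : ℝ) (hK : 0 < K)
    (ρ θ : ℝ) (hρ0 : 0 ≤ ρ) (hρ1 : ρ ≤ 1) (hθ : 0 ≤ θ) {n : ℕ} (x : Fin n → X) (hx : HasType P x) :
    Ess W U K x ≤ K ^ ρ * Real.exp (n * ∑ a, P a * Real.log (∑ y, W a y * 
      (∑ x', (U x' y / U a y) ^ θ) ^ ρ)) := by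
  classical
  have hpos : ∀ a y, 0 < ∑ x', (U x' y / U a y) ^ θ := fun a y => 
    Finset.sum_pos (fun x' _ => Real.rpow_pos_of_pos (div_pos (hU _ _) (hU _ _)) _) Finset.univ_nonempty
  rw [← type_prod P x hx (fun a => ∑ y, W a y * (∑ x', (U x' y / U a y) ^ θ) ^ ρ) 
    (fun a => Finset.sum_pos (fun y _ => mul_pos (hW _ _) (Real.rpow_pos_of_pos (hpos _ _) _)) 
      Finset.univ_nonempty)]
  rw [← sum_prod_pi (fun i y => W (x i) y * (∑ x', (U x' y / U (x i) y) ^ θ) ^ ρ), Finset.mul_sum]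
  unfold Ess
  refine Finset.sum_le_sum fun y _ => ?_
  rw [Finset.prod_mul_distrib, mul_left_comm]
  refine mul_le_mul_of_nonneg_left ?_ (Finset.prod_nonneg fun i _ => (hW _ _).le)
  set N : ℝ := ((Finset.univ.filter fun x' : Fin n → X => 
      ∏ i, U (x i) (y i) ≤ ∏ i, U (x' i) (y i)).card : ℝ) with hN
  have hN1 : N ≤ ∏ i, ∑ x', (U x' (y i) / U (x i) (y i)) ^ θ := by
    rw [← sum_prod_pi (fun i x' => (U x' (y i) / U (x i) (y i)) ^ θ), hN, Finset.card_filter]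
    push_cast
    refine Finset.sum_le_sum fun x' _ => ?_
    split_ifs with h
    · rw [Real.finsetProd_rpow _ _ (fun i _ => (div_pos (hU _ _) (hU _ _)).le)]
      refine Real.one_le_rpow ?_ hθ
      rw [Finset.prod_div_distrib, one_le_div (Finset.prod_pos fun i _ => hU _ _)]
      exact h
    · exact Finset.prod_nonneg fun i _ => Real.rpow_nonneg (div_pos (hU _ _) (hU _ _)).le _
  have hN0 : 0 ≤ N := Nat.cast_nonneg _
  calc min 1 (K * N) ≤ (K * N) ^ ρ := by
        have hKN : 0 ≤ K * N := by positivity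
        rcases le_total 1 (K * N) with h | h
        · exact (min_le_left _ _).trans (Real.one_le_rpow h hρ0)
        · refine (min_le_right _ _).trans ?_
          exact Real.self_le_rpow_of_le_one hKN h hρ1
    _ ≤ (K * ∏ i, ∑ x', (U x' (y i) / U (x i) (y i)) ^ θ) ^ ρ := by gcongr
    _ = _ := by
      rw [Real.mul_rpow hK.le (Finset.prod_nonneg fun i _ => (hpos _ _).le),
        Real.finsetProd_rpow _ _ (fun i _ => (hpos _ _).le)]

lemma converse {X Y : Type*} [Fintype X] [Fintype Y] [DecidableEq X] [Nonempty X] [Nonempty Y]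
    (P : X → ℝ) (hP1 : ∑ x, P x = 1) (W U : X → Y → ℝ)
    (hW : ∀ x y, 0 < W x y) (hU : ∀ x y, 0 < U x y)
    (V : X → Y → ℝ) (hV : ∀ x y, 0 < V x y) (hV1 : ∀ x, ∑ y, V x y = 1)
    (Q : Y → X → ℝ) (hQ : ∀ y x, 0 < Q y x) (hQ1 : ∀ y, ∑ x, Q y x = 1)
    (hg : (∀ x x' y, U x y ≤ U x' y) ∨ 
      0 < ∑ a, P a * ∑ y, V a y * ∑ x', Q y x' * (Real.log (U x' y) - Real.log (U a y)))
    (D H ε : ℝ) (hε : 0 < ε)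
    (hD : D = ∑ a, P a * ∑ y, V a y * Real.log (V a y / W a y))
    (hH : H = ∑ a, P a * ∑ y, V a y * ∑ x', Q y x' * -Real.log (Q y x')) :
    ∃ N : ℕ, ∀ n ≥ N, ∀ (x : Fin n → X), HasType P x → ∀ K : ℝ, 0 < K →
      (1 / 2) * (Real.exp (-(n * (D + ε))) * min 1 (K * Real.exp (n * (H - ε)))) ≤ Ess W U K x := by
  classical
  let κ : X → Y × X → ℝ := fun a z => V a z.1 * Q z.1 z.2
  have hκ : ∀ a z, 0 < κ a z := fun a z => mul_pos (hV _ _) (hQ _ _)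
  have hmean : ∀ (a : X) (h : Y → X → ℝ), ∑ z : Y × X, κ a z * h z.1 z.2 = 
      ∑ y, V a y * ∑ x', Q y x' * h y x' := by
    intro a h
    rw [Fintype.sum_prod_type]
    refine Finset.sum_congr rfl fun y _ => ?_
    rw [Finset.mul_sum]
    exact Finset.sum_congr rfl fun x' _ => by simp [κ]; ring
  have hκ1 : ∀ a, ∑ z, κ a z = 1 := by
    intro a
    have := hmean a (fun _ _ => 1)
    simpa [hQ1, hV1] using this
  -- bad event 1
  let h1 : X → Y × X → ℝ := fun a z => Real.log (U a z.1) - Real.log (U z.2 z.1)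
  let h2 : X → Y × X → ℝ := fun a z => H - ε + Real.log (Q z.1 z.2)
  let h3 : X → Y × X → ℝ := fun a z => Real.log (V a z.1 / W a z.1) - D - ε
  obtain ⟨r1, hr10, hr11, hr1⟩ : ∃ r : ℝ, 0 ≤ r ∧ r < 1 ∧ ∀ (n : ℕ) (x : Fin n → X), HasType P x →
      ∑ z : Fin n → Y × X, (∏ i, κ (x i) (z i)) * 
        (if 0 < ∑ i, h1 (x i) (z i) then 1 else 0) ≤ r ^ n := by
    rcases hg with hg | hg
    · refine ⟨0, le_rfl, zero_lt_one, fun n x hx => ?_⟩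
      have : ∀ z : Fin n → Y × X, ¬ (0 < ∑ i, h1 (x i) (z i)) := by
        intro z
        rw [not_lt]
        refine Finset.sum_nonpos fun i _ => ?_
        simp only [h1, sub_nonpos]
        exact Real.log_le_log (hU _ _) (hg _ _ _)
      simp only [this, if_false, mul_zero, Finset.sum_const_zero]
      positivity
    · obtain ⟨r, h0, h1', hr⟩ := lln P κ h1 hκ hκ1 (by
        have : ∀ a, ∑ z, κ a z * h1 a z = 
          -∑ y, V a y * ∑ x', Q y x' * (Real.log (U x' y) - Real.log (U a y)) := by
          intro a
          rw [hmean a (fun y x' => Real.log (U a y) - Real.log (U x' y)), ← Finset.sum_neg_distrib]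
          refine Finset.sum_congr rfl fun y _ => ?_
          rw [← mul_neg, ← Finset.sum_neg_distrib]
          congr 1
          exact Finset.sum_congr rfl fun x' _ => by ring
        simp only [this, mul_neg, Finset.sum_neg_distrib]
        linarith)
      refine ⟨r, h0, h1', fun n x hx => (Finset.sum_le_sum fun z _ => ?_).trans (hr n x hx)⟩
      refine mul_le_mul_of_nonneg_left ?_ (Finset.prod_nonneg fun i _ => (hκ _ _).le)
      split_ifs with ha hb hb
      · exact le_rfl
      · exact absurd ha.le hb
      · norm_num
      · exact le_rfl
  obtain ⟨r2, hr20, hr21, hr2⟩ := lln P κ h2 hκ hκ1 (by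
    have : ∀ a, ∑ z, κ a z * h2 a z = 
        H - ε - ∑ y, V a y * ∑ x', Q y x' * -Real.log (Q y x') := by
      intro a
      rw [hmean a (fun y x' => H - ε + Real.log (Q y x'))]
      simp only [mul_add, Finset.sum_add_distrib, ← Finset.sum_mul, hQ1, hV1, mul_neg, 
        Finset.sum_neg_distrib]
      ring
    simp only [this, mul_sub (P _), Finset.sum_sub_distrib, ← hH, ← Finset.sum_mul, hP1]
    linarith)
  obtain ⟨r3, hr30, hr31, hr3⟩ := lln P κ h3 hκ hκ1 (by
    have : ∀ a, ∑ z, κ a z * h3 a z = 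
        (∑ y, V a y * Real.log (V a y / W a y)) - D - ε := by
      intro a
      rw [hmean a (fun y x' => Real.log (V a y / W a y) - D - ε)]
      simp only [mul_sub, Finset.sum_sub_distrib, ← Finset.sum_mul, hQ1, hV1]
      ring
    simp only [this, mul_sub (P _), Finset.sum_sub_distrib, ← hD, ← Finset.sum_mul, hP1]
    linarith)
  have hlim : Filter.Tendsto (fun n : ℕ => r1 ^ n + r2 ^ n + r3 ^ n) Filter.atTop (nhds 0) := by
    have := ((tendsto_pow_atTop_nhds_zero_of_lt_one hr10 hr11).add 
      (tendsto_pow_atTop_nhds_zero_of_lt_one hr20 hr21)).add 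
      (tendsto_pow_atTop_nhds_zero_of_lt_one hr30 hr31)
    simpa using this
  obtain ⟨N, hN⟩ := Filter.eventually_atTop.mp 
    (hlim.eventually (gt_mem_nhds (show (0:ℝ) < 1/2 by norm_num)))
  refine ⟨N, fun n hn x hx K hK => ?_⟩
  let μ : (Fin n → Y) → (Fin n → X) → ℝ := fun y x' => ∏ i, κ (x i) (y i, x' i)
  let good : (Fin n → Y) → (Fin n → X) → Prop := fun y x' => 
    ∑ i, h1 (x i) (y i, x' i) ≤ 0 ∧ ∑ i, h2 (x i) (y i, x' i) ≤ 0 ∧ ∑ i, h3 (x i) (y i, x' i) ≤ 0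
  have hsplit : ∀ F : (Fin n → Y × X) → ℝ, ∑ z, F z = 
      ∑ y : Fin n → Y, ∑ x' : Fin n → X, F (fun i => (y i, x' i)) := by
    intro F
    rw [← Fintype.sum_prod_type']
    exact Fintype.sum_equiv (Equiv.arrowProdEquivProdArrow _ _ _) _ _ (fun z => rfl)
  have hgood : 1 / 2 ≤ ∑ y, ∑ x', μ y x' * (if good y x' then 1 else 0) := by
    have htot : ∑ z : Fin n → Y × X, (∏ i, κ (x i) (z i)) = 1 := by
      rw [sum_prod_pi (fun i => κ (x i))]; simp [hκ1]
    have h4 := hN n hn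
    have h5 := hr1 n x hx
    have h6 := hr2 n x hx
    have h7 := hr3 n x hx
    have h8 : ∑ z : Fin n → Y × X, (∏ i, κ (x i) (z i)) ≤ 
      ∑ z : Fin n → Y × X, ((∏ i, κ (x i) (z i)) * (if good (fun i => (z i).1) (fun i => (z i).2) then 1 else 0) 
       + (∏ i, κ (x i) (z i)) * (if 0 < ∑ i, h1 (x i) (z i) then 1 else 0)
       + (∏ i, κ (x i) (z i)) * (if 0 ≤ ∑ i, h2 (x i) (z i) then 1 else 0)
       + (∏ i, κ (x i) (z i)) * (if 0 ≤ ∑ i, h3 (x i) (z i) then 1 else 0)) := by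
      refine Finset.sum_le_sum fun z _ => ?_
      simp only [← mul_add]
      have hz : 0 ≤ ∏ i, κ (x i) (z i) := Finset.prod_nonneg fun i _ => (hκ _ _).le
      refine le_mul_of_one_le_right hz ?_
      by_cases ha : 0 < ∑ i, h1 (x i) (z i)
      · rw [if_pos ha]; split_ifs <;> norm_num
      by_cases hb : 0 ≤ ∑ i, h2 (x i) (z i)
      · rw [if_pos hb]; split_ifs <;> norm_num
      by_cases hc : 0 ≤ ∑ i, h3 (x i) (z i)
      · rw [if_pos hc]; split_ifs <;> norm_num
      · have : good (fun i => (z i).1) (fun i => (z i).2) := 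
          ⟨not_lt.mp ha, (not_le.mp hb).le, (not_le.mp hc).le⟩
        rw [if_pos this]; split_ifs <;> norm_num
    rw [Finset.sum_add_distrib, Finset.sum_add_distrib, Finset.sum_add_distrib, htot, 
      hsplit (fun z => (∏ i, κ (x i) (z i)) * 
        (if good (fun i => (z i).1) (fun i => (z i).2) then 1 else 0))] at h8
    simp only [μ]
    linarith
  set B := Real.exp (-(n * (D + ε))) * min 1 (K * Real.exp (n * (H - ε))) with hB
  have hmin0 : 0 ≤ min 1 (K * Real.exp (n * (H - ε))) := le_min zero_le_one (by positivity)
  have hB0 : 0 ≤ B := by positivity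
  calc (1 / 2) * B ≤ (∑ y, ∑ x', μ y x' * (if good y x' then 1 else 0)) * B := by gcongr
    _ = ∑ y, (∑ x', μ y x' * (if good y x' then 1 else 0)) * B := by rw [Finset.sum_mul]
    _ ≤ _ := by
      unfold Ess
      refine Finset.sum_le_sum fun y _ => ?_
      have hWp : 0 < ∏ i, W (x i) (y i) := Finset.prod_pos fun i _ => hW _ _
      have hVp : 0 < ∏ i, V (x i) (y i) := Finset.prod_pos fun i _ => hV _ _
      by_cases hex : ∃ x', good y x'
      swap
      · push Not at hex
        simp only [hex, if_false, mul_zero, Finset.sum_const_zero, zero_mul]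
        exact mul_nonneg hWp.le (le_min zero_le_one (by positivity))
      obtain ⟨x0, hx0⟩ := hex
      have hWV : (∏ i, V (x i) (y i)) * Real.exp (-(n * (D + ε))) ≤ ∏ i, W (x i) (y i) := by
        have h := hx0.2.2
        simp only [h3, Finset.sum_sub_distrib, Finset.sum_const, Finset.card_univ, 
          Fintype.card_fin, nsmul_eq_mul] at h
        rw [← Real.log_prod (fun i _ => (div_pos (hV _ _) (hW _ _)).ne'), Finset.prod_div_distrib] at h
        have h' : Real.log ((∏ i, V (x i) (y i)) / ∏ i, W (x i) (y i)) ≤ n * (D + ε) := by linarith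
        rw [Real.log_le_iff_le_exp (by positivity), div_le_iff₀ hWp] at h'
        rw [Real.exp_neg, ← div_eq_mul_inv, div_le_iff₀ (Real.exp_pos _)]
        linarith
      let q : ℝ := ∑ x' : Fin n → X, (∏ i, Q (y i) (x' i)) * (if good y x' then 1 else 0)
      have hq0 : 0 ≤ q := Finset.sum_nonneg fun x' _ => mul_nonneg 
        (Finset.prod_nonneg fun i _ => (hQ _ _).le) (by split_ifs <;> norm_num)
      have hq1 : q ≤ 1 := by
        calc q ≤ ∑ x' : Fin n → X, (∏ i, Q (y i) (x' i)) := by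
              refine Finset.sum_le_sum fun x' _ => ?_
              refine mul_le_of_le_one_right (Finset.prod_nonneg fun i _ => (hQ _ _).le) ?_
              split_ifs <;> norm_num
          _ = 1 := by rw [sum_prod_pi (fun i => Q (y i))]; simp [hQ1]
      have hμ : ∑ x', μ y x' * (if good y x' then 1 else 0) = (∏ i, V (x i) (y i)) * q := by
        simp only [q, Finset.mul_sum]
        refine Finset.sum_congr rfl fun x' _ => ?_
        simp only [μ, κ, Finset.prod_mul_distrib]; ring
      have hA : Real.exp (n * (H - ε)) * q ≤ ((Finset.univ.filter fun x' : Fin n → X => 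
          ∏ i, U (x i) (y i) ≤ ∏ i, U (x' i) (y i)).card : ℝ) := by
        rw [Finset.card_filter]
        push_cast
        simp only [q, Finset.mul_sum]
        refine Finset.sum_le_sum fun x' _ => ?_
        by_cases hgd : good y x'
        · rw [if_pos hgd, mul_one]
          have hs : ∏ i, U (x i) (y i) ≤ ∏ i, U (x' i) (y i) := by
            have h := hgd.1
            simp only [h1, Finset.sum_sub_distrib, sub_nonpos] at h
            rw [← Real.log_prod (fun i _ => (hU _ _).ne'), ← Real.log_prod (fun i _ => (hU _ _).ne'),
              Real.log_le_log_iff (Finset.prod_pos fun i _ => hU _ _) 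
                (Finset.prod_pos fun i _ => hU _ _)] at h
            exact h
          rw [if_pos hs]
          have h := hgd.2.1
          simp only [h2, Finset.sum_add_distrib, Finset.sum_const, Finset.card_univ, 
            Fintype.card_fin, nsmul_eq_mul] at h
          rw [← Real.log_prod (fun i _ => (hQ _ _).ne')] at h
          have hQp : 0 < ∏ i, Q (y i) (x' i) := Finset.prod_pos fun i _ => hQ _ _
          rw [← Real.exp_log hQp, ← Real.exp_add]
          exact Real.exp_le_one_iff.mpr h
        · rw [if_neg hgd]
          simp only [mul_zero]
          split_ifs <;> norm_num
      have hmin : q * min 1 (K * Real.exp (n * (H - ε))) ≤ min 1 (K * 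
          ((Finset.univ.filter fun x' : Fin n → X => 
          ∏ i, U (x i) (y i) ≤ ∏ i, U (x' i) (y i)).card : ℝ)) := by
        refine le_min ?_ ?_
        · exact mul_le_one₀ hq1 hmin0 (min_le_left _ _)
        · calc q * min 1 (K * Real.exp (n * (H - ε))) ≤ q * (K * Real.exp (n * (H - ε))) := by
                gcongr; exact min_le_right _ _
            _ = K * (Real.exp (n * (H - ε)) * q) := by ring
            _ ≤ _ := by gcongr
      rw [hμ, hB]
      calc _ = ((∏ i, V (x i) (y i)) * Real.exp (-(n * (D + ε)))) * 
              (q * min 1 (K * Real.exp (n * (H - ε)))) := by ring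
        _ ≤ _ := mul_le_mul hWV hmin (by positivity) hWp.le

lemma deriv_right {h : ℝ → ℝ} {h' a b : ℝ} (hd : HasDerivAt h h' a) (hab : a < b)
    (hm : ∀ t, a < t → t < b → h t ≤ h a) : h' ≤ 0 := by
  have h1 := hd.tendsto_slope_zero_right
  refine le_of_tendsto h1 ?_
  have : Set.Ioo (0:ℝ) (b - a) ∈ nhdsWithin (0:ℝ) (Set.Ioi 0) := Ioo_mem_nhdsGT (by linarith)
  filter_upwards [this] with t ht
  have := hm (a + t) (by linarith [ht.1]) (by linarith [ht.2])
  have h2 : 0 ≤ t⁻¹ := by have := ht.1; positivity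
  simp only [smul_eq_mul]
  exact mul_nonpos_of_nonneg_of_nonpos h2 (by linarith)

lemma deriv_left {h : ℝ → ℝ} {h' a b : ℝ} (hd : HasDerivAt h h' a) (hab : b < a)
    (hm : ∀ t, b < t → t < a → h t ≤ h a) : 0 ≤ h' := by
  have h1 := hd.tendsto_slope_zero_left
  refine ge_of_tendsto h1 ?_
  have : Set.Ioo (b - a) (0:ℝ) ∈ nhdsWithin (0:ℝ) (Set.Iio 0) := Ioo_mem_nhdsLT (by linarith)
  filter_upwards [this] with t ht
  have := hm (a + t) (by linarith [ht.1]) (by linarith [ht.2])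
  have h2 : t⁻¹ ≤ 0 := inv_nonpos.mpr ht.2.le
  simp only [smul_eq_mul]
  exact mul_nonneg_of_nonpos_of_nonpos h2 (by linarith)

section E
variable {X Y : Type*} [Fintype X] [Fintype Y] [Nonempty X] [Nonempty Y]

/-- log-partition -/
noncomputable def lpart (u : X → Y → ℝ) (θ : ℝ) (y : Y) : ℝ := 
  Real.log (∑ x', Real.exp (θ * u x' y))

noncomputable def ell (u : X → Y → ℝ) (θ : ℝ) (x : X) (y : Y) : ℝ := lpart u θ y - θ * u x y

noncomputable def tq (u : X → Y → ℝ) (θ : ℝ) (y : Y) (x : X) : ℝ := 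
  Real.exp (θ * u x y) / ∑ x', Real.exp (θ * u x' y)

noncomputable def ZZ (W u : X → Y → ℝ) (ρ θ : ℝ) (x : X) : ℝ := 
  ∑ y, W x y * Real.exp (ρ * ell u θ x y)

noncomputable def ff (P : X → ℝ) (W u : X → Y → ℝ) (c ρ θ : ℝ) : ℝ := 
  -∑ x, P x * Real.log (ZZ W u ρ θ x) + ρ * c

/-- score gap -/
noncomputable def gap (P : X → ℝ) (u V : X → Y → ℝ) (Q : Y → X → ℝ) : ℝ := 
  ∑ a, P a * ∑ y, V a y * ∑ x', Q y x' * (u x' y - u a y)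

lemma part_pos (u : X → Y → ℝ) (θ : ℝ) (y : Y) : 0 < ∑ x', Real.exp (θ * u x' y) :=
  Finset.sum_pos (fun _ _ => Real.exp_pos _) Finset.univ_nonempty

lemma tq_pos (u : X → Y → ℝ) (θ : ℝ) (y : Y) (x : X) : 0 < tq u θ y x :=
  div_pos (Real.exp_pos _) (part_pos u θ y)

lemma tq_sum (u : X → Y → ℝ) (θ : ℝ) (y : Y) : ∑ x, tq u θ y x = 1 := by
  unfold tq; rw [← Finset.sum_div, div_self (part_pos u θ y).ne']

lemma log_tq (u : X → Y → ℝ) (θ : ℝ) (y : Y) (x : X) : Real.log (tq u θ y x) = - ell u θ x y := by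
  unfold tq ell lpart
  rw [Real.log_div (Real.exp_pos _).ne' (part_pos u θ y).ne', Real.log_exp]; ring

lemma ell_ge (u : X → Y → ℝ) (θ : ℝ) (x x' : X) (y : Y) : θ * (u x' y - u x y) ≤ ell u θ x y := by
  unfold ell lpart
  have : Real.exp (θ * u x' y) ≤ ∑ x', Real.exp (θ * u x' y) := 
    Finset.single_le_sum (f := fun x' => Real.exp (θ * u x' y)) (fun _ _ => (Real.exp_pos _).le) 
      (Finset.mem_univ _)
  have := Real.log_le_log (Real.exp_pos _) this
  rw [Real.log_exp] at this
  linarith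

lemma ell_nonneg (u : X → Y → ℝ) (θ : ℝ) (x : X) (y : Y) : 0 ≤ ell u θ x y := by
  simpa using ell_ge u θ x x y

lemma ZZ_pos (W u : X → Y → ℝ) (hW : ∀ x y, 0 < W x y) (ρ θ : ℝ) (x : X) : 0 < ZZ W u ρ θ x :=
  Finset.sum_pos (fun _ _ => mul_pos (hW _ _) (Real.exp_pos _)) Finset.univ_nonempty

lemma ZZ_one_le (W u : X → Y → ℝ) (hW : ∀ x y, 0 < W x y) (hWsum : ∀ x, ∑ y, W x y = 1) 
    (ρ θ : ℝ) (hρ : 0 ≤ ρ) (x : X) : 1 ≤ ZZ W u ρ θ x := by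
  rw [← hWsum x]
  refine Finset.sum_le_sum fun y _ => le_mul_of_one_le_right (hW _ _).le ?_
  exact Real.one_le_exp (mul_nonneg hρ (ell_nonneg _ _ _ _))

lemma ell_deriv (u : X → Y → ℝ) (θ : ℝ) (x : X) (y : Y) : 
    HasDerivAt (fun θ => ell u θ x y) (∑ x', tq u θ y x' * (u x' y - u x y)) θ := by
  have h : HasDerivAt (fun θ => ell u θ x y) 
      ((∑ x', Real.exp (θ * u x' y) * (1 * u x' y)) / (∑ x', Real.exp (θ * u x' y)) - 1 * u x y) θ := by
    unfold ell lpart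
    refine HasDerivAt.sub ?_ ((hasDerivAt_id θ).mul_const _)
    refine HasDerivAt.log ?_ (part_pos u θ y).ne'
    exact HasDerivAt.fun_sum fun x' _ => ((hasDerivAt_id θ).mul_const _).exp
  convert h using 1
  simp only [mul_sub, Finset.sum_sub_distrib, ← Finset.sum_mul, tq_sum, one_mul]
  congr 1
  rw [Finset.sum_div]
  refine Finset.sum_congr rfl fun x' _ => ?_
  unfold tq; ring

lemma ff_cont (P : X → ℝ) (W u : X → Y → ℝ) (hW : ∀ x y, 0 < W x y) (c : ℝ) : 
    Continuous (fun z : ℝ × ℝ => ff P W u c z.1 z.2) := by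
  unfold ff
  refine Continuous.add (Continuous.neg (continuous_finsetSum _ fun x _ => ?_)) (by fun_prop)
  refine continuous_const.mul (Continuous.log ?_ fun z => (ZZ_pos W u hW _ _ x).ne')
  unfold ZZ
  refine continuous_finsetSum _ fun y _ => ?_
  refine continuous_const.mul (Real.continuous_exp.comp ?_)
  refine continuous_fst.mul ?_
  unfold ell lpart
  refine Continuous.sub (Continuous.log (by fun_prop) fun z => (part_pos u _ y).ne') (by fun_prop)

/-- tilted channel -/
noncomputable def tV (W u : X → Y → ℝ) (ρ θ : ℝ) (x : X) (y : Y) : ℝ := 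
  W x y * Real.exp (ρ * ell u θ x y) / ZZ W u ρ θ x

noncomputable def Eell (P : X → ℝ) (u V : X → Y → ℝ) (θ : ℝ) : ℝ := 
  ∑ a, P a * ∑ y, V a y * ell u θ a y

lemma ff_deriv_rho (P : X → ℝ) (W u : X → Y → ℝ) (hW : ∀ x y, 0 < W x y) (c ρ θ : ℝ) :
    HasDerivAt (fun ρ => ff P W u c ρ θ) (c - Eell P u (tV W u ρ θ) θ) ρ := by
  have h : HasDerivAt (fun ρ => ff P W u c ρ θ) 
    (-∑ x, P x * ((∑ y, W x y * (Real.exp (ρ * ell u θ x y) * (1 * ell u θ x y))) / ZZ W u ρ θ x) 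
      + 1 * c) ρ := by
    unfold ff
    refine HasDerivAt.add (HasDerivAt.neg (HasDerivAt.fun_sum fun x _ => ?_)) 
      ((hasDerivAt_id ρ).mul_const _)
    refine HasDerivAt.const_mul _ (HasDerivAt.log ?_ (ZZ_pos W u hW _ _ x).ne')
    unfold ZZ
    refine HasDerivAt.fun_sum fun y _ => HasDerivAt.const_mul _ ?_
    exact ((hasDerivAt_id ρ).mul_const _).exp
  convert h using 1
  rw [one_mul, sub_eq_neg_add]
  congr 2
  unfold Eell
  refine Finset.sum_congr rfl fun x _ => ?_
  congr 1
  rw [Finset.sum_div]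
  refine Finset.sum_congr rfl fun y _ => ?_
  unfold tV; ring

lemma ff_deriv_theta (P : X → ℝ) (W u : X → Y → ℝ) (hW : ∀ x y, 0 < W x y) (c ρ θ : ℝ) :
    HasDerivAt (fun θ => ff P W u c ρ θ) (-(ρ * gap P u (tV W u ρ θ) (tq u θ))) θ := by
  have h : HasDerivAt (fun θ => ff P W u c ρ θ) 
    (-∑ x, P x * ((∑ y, W x y * (Real.exp (ρ * ell u θ x y) * 
      (ρ * ∑ x', tq u θ y x' * (u x' y - u x y)))) / ZZ W u ρ θ x)) θ := by
    unfold ff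
    refine HasDerivAt.add_const _ (HasDerivAt.neg (HasDerivAt.fun_sum fun x _ => ?_))
    refine HasDerivAt.const_mul _ (HasDerivAt.log ?_ (ZZ_pos W u hW _ _ x).ne')
    unfold ZZ
    refine HasDerivAt.fun_sum fun y _ => HasDerivAt.const_mul _ ?_
    exact ((ell_deriv u θ x y).const_mul ρ).exp
  convert h using 2
  unfold gap
  rw [Finset.mul_sum]
  refine Finset.sum_congr rfl fun x _ => ?_
  rw [mul_left_comm]
  congr 1
  rw [Finset.sum_div, Finset.mul_sum]
  refine Finset.sum_congr rfl fun y _ => ?_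
  unfold tV; ring

lemma tV_pos (W u : X → Y → ℝ) (hW : ∀ x y, 0 < W x y) (ρ θ : ℝ) (x : X) (y : Y) : 
    0 < tV W u ρ θ x y := 
  div_pos (mul_pos (hW _ _) (Real.exp_pos _)) (ZZ_pos W u hW _ _ _)

lemma tV_sum (W u : X → Y → ℝ) (hW : ∀ x y, 0 < W x y) (ρ θ : ℝ) (x : X) : 
    ∑ y, tV W u ρ θ x y = 1 := by
  unfold tV; rw [← Finset.sum_div]; exact div_self (ZZ_pos W u hW _ _ _).ne'

noncomputable def DD (P : X → ℝ) (W V : X → Y → ℝ) : ℝ := 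
  ∑ a, P a * ∑ y, V a y * Real.log (V a y / W a y)

lemma DD_tV (P : X → ℝ) (W u : X → Y → ℝ) (hW : ∀ x y, 0 < W x y) (c ρ θ : ℝ) : 
    DD P W (tV W u ρ θ) = ρ * Eell P u (tV W u ρ θ) θ + (ff P W u c ρ θ - ρ * c) := by
  have h1 : ∀ a y, Real.log (tV W u ρ θ a y / W a y) = ρ * ell u θ a y - Real.log (ZZ W u ρ θ a) := by
    intro a y
    have : tV W u ρ θ a y / W a y = Real.exp (ρ * ell u θ a y) / ZZ W u ρ θ a := by
      unfold tV; have := (hW a y).ne'; field_simp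
    rw [this, Real.log_div (Real.exp_pos _).ne' (ZZ_pos W u hW _ _ _).ne', Real.log_exp]
  unfold DD Eell ff
  simp only [h1]
  have h2 : ∀ a, ∑ y, tV W u ρ θ a y * (ρ * ell u θ a y - Real.log (ZZ W u ρ θ a)) = 
      ρ * (∑ y, tV W u ρ θ a y * ell u θ a y) - Real.log (ZZ W u ρ θ a) := by
    intro a
    simp only [mul_sub, Finset.sum_sub_distrib, ← Finset.sum_mul, tV_sum W u hW, one_mul]
    rw [Finset.mul_sum]
    congr 1
    exact Finset.sum_congr rfl fun y _ => by ring
  simp only [h2]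
  simp only [mul_sub, Finset.sum_sub_distrib]
  rw [Finset.mul_sum]
  have : ∀ a, P a * (ρ * ∑ y, tV W u ρ θ a y * ell u θ a y) = 
    ρ * (P a * ∑ y, tV W u ρ θ a y * ell u θ a y) := fun a => by ring
  simp only [this]
  ring

set_option maxHeartbeats 400000 in
lemma core (P : X → ℝ) (hP0 : ∀ x, 0 < P x) (W u : X → Y → ℝ) 
    (hW : ∀ x y, 0 < W x y) (hWsum : ∀ x, ∑ y, W x y = 1) (c F : ℝ) (hc : 0 ≤ c)
    (hF : ∀ ρ θ, 0 ≤ ρ → ρ ≤ 1 → 0 ≤ θ → ff P W u c ρ θ ≤ F)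
    (hnt : ∃ x0 x1 y0, u x0 y0 < u x1 y0) : 
    ∃ (V : X → Y → ℝ) (θ : ℝ), (∀ x y, 0 < V x y) ∧ (∀ x, ∑ y, V x y = 1) ∧ 
      0 ≤ gap P u V (tq u θ) ∧ θ * gap P u V (tq u θ) = 0 ∧ 
      DD P W V + max 0 (c - Eell P u V θ) ≤ F := by
  obtain ⟨x0, x1, y0, hlt⟩ := hnt
  set d := u x1 y0 - u x0 y0 with hd
  have hd0 : 0 < d := by linarith
  have hf0 : ∀ θ, ff P W u c 0 θ = 0 := by
    intro θ; simp [ff, ZZ, hWsum]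
  have hfc : ∀ ρ θ, 0 ≤ ρ → ff P W u c ρ θ ≤ ρ * c := by
    intro ρ θ hρ
    unfold ff
    have : 0 ≤ ∑ x, P x * Real.log (ZZ W u ρ θ x) := Finset.sum_nonneg fun x _ => 
      mul_nonneg (hP0 x).le (Real.log_nonneg (ZZ_one_le W u hW hWsum ρ θ hρ x))
    linarith
  by_cases hcase : ∃ ρ θ, 0 ≤ ρ ∧ ρ ≤ 1 ∧ 0 ≤ θ ∧ 0 < ff P W u c ρ θ
  · obtain ⟨ρ0, θ0, hρ0, hρ1, hθ0, hpos⟩ := hcase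
    set f0 := ff P W u c ρ0 θ0 with hf0def
    have hc0 : 0 < c := by
      have := hfc ρ0 θ0 hρ0
      by_contra hcc
      have : c = 0 := le_antisymm (not_lt.mp hcc) hc
      subst this
      simp only [mul_zero] at *; linarith
    have hcoer : ∀ ρ θ, 0 ≤ ρ → ff P W u c ρ θ ≤ ρ * c - P x0 * (Real.log (W x0 y0) + ρ * (θ * d)) := by
      intro ρ θ hρ
      unfold ff
      have h1 : P x0 * Real.log (ZZ W u ρ θ x0) ≤ ∑ x, P x * Real.log (ZZ W u ρ θ x) := 
        Finset.single_le_sum (f := fun x => P x * Real.log (ZZ W u ρ θ x)) (fun x _ => 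
          mul_nonneg (hP0 x).le (Real.log_nonneg (ZZ_one_le W u hW hWsum ρ θ hρ x))) 
          (Finset.mem_univ _)
      have h2 : Real.log (W x0 y0) + ρ * (θ * d) ≤ Real.log (ZZ W u ρ θ x0) := by
        rw [← Real.log_exp (ρ * (θ * d)), ← Real.log_mul (hW _ _).ne' (Real.exp_pos _).ne']
        refine Real.log_le_log (mul_pos (hW _ _) (Real.exp_pos _)) ?_
        calc W x0 y0 * Real.exp (ρ * (θ * d)) ≤ W x0 y0 * Real.exp (ρ * ell u θ x0 y0) := by
              have := ell_ge u θ x0 x1 y0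
              have := (hW x0 y0).le
              gcongr
          _ ≤ _ := Finset.single_le_sum (f := fun y => W x0 y * Real.exp (ρ * ell u θ x0 y)) 
            (fun y _ => (mul_pos (hW _ _) (Real.exp_pos _)).le) (Finset.mem_univ _)
      have := mul_le_mul_of_nonneg_left h2 (hP0 x0).le
      linarith
    -- bound on theta
    set B := max θ0 ((c + P x0 * |Real.log (W x0 y0)|) / (P x0 * (f0 / c) * d)) with hB
    have hBig : ∀ ρ θ, 0 ≤ ρ → ρ ≤ 1 → B ≤ θ → ff P W u c ρ θ ≤ f0 := by
      intro ρ θ h0 h1 hθ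
      by_contra hcon
      push Not at hcon
      have h2 : f0 / c ≤ ρ := by
        rw [div_le_iff₀ hc0]; linarith [hfc ρ θ h0]
      have h3 := hcoer ρ θ h0
      have h4 : (c + P x0 * |Real.log (W x0 y0)|) / (P x0 * (f0 / c) * d) ≤ θ := 
        (le_max_right _ _).trans hθ
      have hPx := hP0 x0
      have h5 : 0 < P x0 * (f0 / c) * d := by positivity
      rw [div_le_iff₀ h5] at h4
      have hθ' : 0 ≤ θ := hθ0.trans ((le_max_left _ _).trans hθ)
      have h6 : θ * (P x0 * (f0 / c) * d) ≤ θ * (P x0 * ρ * d) := by gcongr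
      have h7 : -(P x0 * |Real.log (W x0 y0)|) ≤ P x0 * Real.log (W x0 y0) := by
        rw [← mul_neg]; gcongr; exact neg_abs_le _
      have h8 : ρ * c ≤ c := mul_le_of_le_one_left hc0.le h1
      have h9 : θ * (P x0 * ρ * d) = P x0 * (ρ * (θ * d)) := by ring
      rw [mul_add] at h3
      linarith
    obtain ⟨⟨ρ, θ⟩, hmem, hmax⟩ := (isCompact_Icc.prod isCompact_Icc : 
      IsCompact ((Set.Icc (0:ℝ) 1) ×ˢ (Set.Icc (0:ℝ) B))).exists_isMaxOn 
      ⟨(ρ0, θ0), ⟨⟨hρ0, hρ1⟩, ⟨hθ0, le_max_left _ _⟩⟩⟩ (ff_cont P W u hW c).continuousOn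
    obtain ⟨⟨hρa, hρb⟩, ⟨hθa, hθb⟩⟩ := hmem
    simp only at hρa hρb hθa hθb
    have hmax' : ∀ ρ' θ', ρ' ∈ Set.Icc (0:ℝ) 1 → θ' ∈ Set.Icc (0:ℝ) B → 
        ff P W u c ρ' θ' ≤ ff P W u c ρ θ := fun ρ' θ' h h' => 
      isMaxOn_iff.mp hmax (ρ', θ') (Set.mk_mem_prod h h')
    clear hmax
    have hge : f0 ≤ ff P W u c ρ θ := hmax' ρ0 θ0 ⟨hρ0, hρ1⟩ ⟨hθ0, le_max_left _ _⟩
    have hglob : ∀ ρ' θ', 0 ≤ ρ' → ρ' ≤ 1 → 0 ≤ θ' → ff P W u c ρ' θ' ≤ ff P W u c ρ θ := by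
      intro ρ' θ' h1 h2 h3
      rcases le_total θ' B with h | h
      · exact hmax' ρ' θ' ⟨h1, h2⟩ ⟨h3, h⟩
      · exact (hBig ρ' θ' h1 h2 h).trans hge
    have hρpos : 0 < ρ := by
      rcases hρa.eq_or_lt with h | h
      · rw [← h, hf0] at hge; linarith
      · exact h
    set V := tV W u ρ θ with hV
    have hdθ := ff_deriv_theta P W u hW c ρ θ
    have hdρ := ff_deriv_rho P W u hW c ρ θ
    rw [← hV] at hdθ hdρ
    have hg0 : 0 ≤ gap P u V (tq u θ) := by
      have := deriv_right hdθ (lt_add_one θ) (fun t h1 _ => hglob ρ t hρa hρb (hθa.trans h1.le))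
      by_contra hcon
      nlinarith
    have hgθ : θ * gap P u V (tq u θ) = 0 := by
      rcases hθa.eq_or_lt with h | h
      · rw [← h, zero_mul]
      · have := deriv_left hdθ h (fun t h1 _ => hglob ρ t hρa hρb h1.le)
        have : gap P u V (tq u θ) = 0 := by
          refine le_antisymm ?_ hg0
          by_contra hcon
          nlinarith
        rw [this, mul_zero]
    have hc1 : 0 ≤ c - Eell P u V θ := 
      deriv_left hdρ hρpos (fun t h1 h2 => hglob t θ h1.le (h2.le.trans hρb) hθa)
    have hc2 : (1 - ρ) * (c - Eell P u V θ) = 0 := by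
      rcases hρb.eq_or_lt with h | h
      · rw [h]; ring
      · have := deriv_right hdρ h (fun t h1 h2 => hglob t θ (hρa.trans h1.le) h2.le hθa)
        rw [le_antisymm this hc1, mul_zero]
    refine ⟨V, θ, tV_pos W u hW ρ θ, tV_sum W u hW ρ θ, hg0, hgθ, ?_⟩
    rw [max_eq_right hc1, hV, DD_tV P W u hW c, ← hV]
    have := hF ρ θ hρa hρb hθa
    nlinarith
  · push Not at hcase
    have htV : ∀ θ, tV W u 0 θ = W := by
      intro θ; ext x y; simp [tV, ZZ, hWsum]
    have hLd : ∀ θ, HasDerivAt (fun θ => -Eell P u W θ) (-gap P u W (tq u θ)) θ := by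
      intro θ
      unfold Eell gap
      refine HasDerivAt.neg (HasDerivAt.fun_sum fun a _ => HasDerivAt.const_mul _ ?_)
      exact HasDerivAt.fun_sum fun y _ => HasDerivAt.const_mul _ (ell_deriv u θ a y)
    have hLc : Continuous (fun θ => -Eell P u W θ) := 
      continuous_iff_continuousAt.mpr fun θ => (hLd θ).continuousAt
    have hcoer : ∀ θ, P x0 * (W x0 y0 * (θ * d)) ≤ Eell P u W θ := by
      intro θ
      unfold Eell
      calc P x0 * (W x0 y0 * (θ * d)) ≤ P x0 * (W x0 y0 * ell u θ x0 y0) := by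
            have := ell_ge u θ x0 x1 y0
            have := (hW x0 y0).le
            have := (hP0 x0).le
            gcongr
        _ ≤ P x0 * (∑ y, W x0 y * ell u θ x0 y) := by
            have := (hP0 x0).le
            gcongr
            exact Finset.single_le_sum (f := fun y => W x0 y * ell u θ x0 y) 
              (fun y _ => mul_nonneg (hW _ _).le (ell_nonneg _ _ _ _)) (Finset.mem_univ _)
        _ ≤ _ := Finset.single_le_sum (f := fun x => P x * (∑ y, W x y * ell u θ x y)) 
              (fun x _ => mul_nonneg (hP0 x).le (Finset.sum_nonneg fun y _ => 
                mul_nonneg (hW _ _).le (ell_nonneg _ _ _ _))) (Finset.mem_univ _)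
    have hPW : 0 < P x0 * (W x0 y0 * d) := mul_pos (hP0 _) (mul_pos (hW _ _) hd0)
    set B := max 0 (Eell P u W 0 / (P x0 * (W x0 y0 * d))) with hB
    have hB0 : 0 ≤ B := le_max_left _ _
    obtain ⟨θ, ⟨hθa, hθb⟩, hmax⟩ := (isCompact_Icc : IsCompact (Set.Icc (0:ℝ) B)).exists_isMaxOn 
      ⟨0, ⟨le_rfl, hB0⟩⟩ hLc.continuousOn
    have hglob : ∀ θ', 0 ≤ θ' → -Eell P u W θ' ≤ -Eell P u W θ := by
      intro θ' h3
      rcases le_total θ' B with h | h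
      · exact hmax (show θ' ∈ _ from ⟨h3, h⟩)
      · have h1 : -Eell P u W 0 ≤ -Eell P u W θ := hmax (show (0:ℝ) ∈ _ from ⟨le_rfl, hB0⟩)
        have h2 : Eell P u W 0 / (P x0 * (W x0 y0 * d)) ≤ θ' := (le_max_right _ _).trans h
        rw [div_le_iff₀ hPW] at h2
        have := hcoer θ'
        nlinarith
    have hg0 : 0 ≤ gap P u W (tq u θ) := by
      have := deriv_right (hLd θ) (lt_add_one θ) (fun t h1 _ => hglob t (hθa.trans h1.le))
      linarith
    have hgθ : θ * gap P u W (tq u θ) = 0 := by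
      rcases hθa.eq_or_lt with h | h
      · rw [← h, zero_mul]
      · have := deriv_left (hLd θ) h (fun t h1 _ => hglob t h1.le)
        rw [le_antisymm (by linarith) hg0, mul_zero]
    have hdρ := ff_deriv_rho P W u hW c 0 θ
    rw [htV] at hdρ
    have hc1 := deriv_right hdρ zero_lt_one (fun t h1 h2 => by 
      simp only [hf0]; exact hcase t θ h1.le h2.le hθa)
    refine ⟨W, θ, hW, hWsum, hg0, hgθ, ?_⟩
    rw [max_eq_left hc1]
    have h0 : DD P W W = 0 := by
      have : ∀ a y, W a y / W a y = 1 := fun a y => div_self (hW a y).ne'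
      simp [DD, this]
    rw [h0]
    have := hF 0 0 le_rfl zero_le_one le_rfl
    rw [hf0] at this
    linarith

noncomputable def HH (P : X → ℝ) (V : X → Y → ℝ) (Q : Y → X → ℝ) : ℝ := 
  ∑ a, P a * ∑ y, V a y * ∑ x', Q y x' * -Real.log (Q y x')

lemma exists_good (P : X → ℝ) (hP0 : ∀ x, 0 < P x) (hP1 : ∑ x, P x = 1) (W u : X → Y → ℝ) 
    (hW : ∀ x y, 0 < W x y) (hWsum : ∀ x, ∑ y, W x y = 1) (c F : ℝ) (hc : 0 ≤ c)
    (hcX : c ≤ Real.log (Fintype.card X))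
    (hF : ∀ ρ θ, 0 ≤ ρ → ρ ≤ 1 → 0 ≤ θ → ff P W u c ρ θ ≤ F) (ε : ℝ) (hε : 0 < ε) :
    ∃ (V : X → Y → ℝ) (Q : Y → X → ℝ), (∀ x y, 0 < V x y) ∧ (∀ x, ∑ y, V x y = 1) ∧ 
      (∀ y x, 0 < Q y x) ∧ (∀ y, ∑ x, Q y x = 1) ∧ 
      ((∀ x x' y, u x y ≤ u x' y) ∨ 0 < gap P u V Q) ∧ 
      DD P W V + max 0 (c - HH P V Q) ≤ F + ε := by
  classical
  by_cases hnt : ∃ x0 x1 y0, u x0 y0 < u x1 y0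
  · obtain ⟨V, θ, hV, hV1, hg, hθg, hval⟩ := core P hP0 W u hW hWsum c F hc hF hnt
    have hmx : ∀ y, ∃ x, ∀ x', u x' y ≤ u x y := fun y => Finite.exists_max (fun x => u x y)
    choose xm hxm using hmx
    let Q : ℝ → Y → X → ℝ := fun δ y x => (1 - δ) * tq u θ y x + δ * (if x = xm y then 1 else 0)
    have hQ1 : ∀ δ y, ∑ x, Q δ y x = 1 := by
      intro δ y
      simp only [Q, Finset.sum_add_distrib, ← Finset.mul_sum, tq_sum]
      simp
    have hH0 : HH P V (Q 0) = Eell P u V θ := by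
      have h1 : ∀ a y, ∑ x', Q 0 y x' * -Real.log (Q 0 y x') = 
          ell u θ a y - θ * ∑ x', tq u θ y x' * (u x' y - u a y) := by
        intro a y
        have : ∀ x', Q 0 y x' * -Real.log (Q 0 y x') = 
            tq u θ y x' * ell u θ a y - θ * (tq u θ y x' * (u x' y - u a y)) := by
          intro x'
          simp only [Q, sub_zero, one_mul, zero_mul, add_zero, log_tq, neg_neg]
          unfold ell; ring
        simp only [this, Finset.sum_sub_distrib, ← Finset.sum_mul, ← Finset.mul_sum, tq_sum, one_mul]
      have h2 : HH P V (Q 0) = Eell P u V θ - θ * gap P u V (tq u θ) := by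
        unfold HH Eell gap
        rw [Finset.mul_sum, ← Finset.sum_sub_distrib]
        refine Finset.sum_congr rfl fun a _ => ?_
        rw [mul_left_comm θ, ← mul_sub, Finset.mul_sum (a := θ), ← Finset.sum_sub_distrib]
        congr 1
        refine Finset.sum_congr rfl fun y _ => ?_
        rw [h1 a y]; ring
      rw [h2, hθg, sub_zero]
    have hHc : Continuous (fun δ => HH P V (Q δ)) := by
      unfold HH
      refine continuous_finsetSum _ fun a _ => continuous_const.mul ?_
      refine continuous_finsetSum _ fun y _ => continuous_const.mul ?_
      refine continuous_finsetSum _ fun x _ => ?_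
      have : ∀ δ, Q δ y x * -Real.log (Q δ y x) = Real.negMulLog (Q δ y x) := by
        intro δ; simp [Real.negMulLog]
      simp only [this]
      exact Real.continuous_negMulLog.comp (by simp only [Q]; fun_prop)
    have hHc' : Continuous (fun δ => DD P W V + max 0 (c - HH P V (Q δ))) := by fun_prop
    have hev : ∀ᶠ δ in nhdsWithin (0:ℝ) (Set.Ioi 0), DD P W V + max 0 (c - HH P V (Q δ)) < F + ε := by
      refine (hHc'.tendsto 0).eventually_lt_const ?_ |>.filter_mono nhdsWithin_le_nhds
      rw [hH0]; linarith
    have hev2 : ∀ᶠ δ in nhdsWithin (0:ℝ) (Set.Ioi 0), δ ∈ Set.Ioo (0:ℝ) 1 := 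
      Ioo_mem_nhdsGT zero_lt_one
    obtain ⟨δ, h1, hδ0, hδ1⟩ := (hev.and hev2).exists
    refine ⟨V, Q δ, hV, hV1, ?_, hQ1 δ, Or.inr ?_, h1.le⟩
    · intro y x
      simp only [Q]
      have h2 : 0 < (1 - δ) * tq u θ y x := mul_pos (by linarith) (tq_pos _ _ _ _)
      have h3 : 0 ≤ δ * (if x = xm y then (1:ℝ) else 0) := by
        refine mul_nonneg hδ0.le ?_
        split_ifs <;> norm_num
      linarith
    · have h2 : gap P u V (Q δ) = (1 - δ) * gap P u V (tq u θ) + 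
          δ * ∑ a, P a * ∑ y, V a y * (u (xm y) y - u a y) := by
        unfold gap
        simp only [Finset.mul_sum]
        rw [← Finset.sum_add_distrib]
        refine Finset.sum_congr rfl fun a _ => ?_
        rw [← Finset.sum_add_distrib]
        refine Finset.sum_congr rfl fun y _ => ?_
        simp only [Q, add_mul, mul_add, Finset.sum_add_distrib]
        congr 1
        · exact Finset.sum_congr rfl fun x _ => by ring
        · simp; ring
      have h3 : 0 < ∑ a, P a * ∑ y, V a y * (u (xm y) y - u a y) := by
        obtain ⟨x0, x1, y0, hlt⟩ := hnt
        have hnn : ∀ a y, 0 ≤ V a y * (u (xm y) y - u a y) := fun a y => 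
          mul_nonneg (hV a y).le (sub_nonneg.mpr (hxm y a))
        refine Finset.sum_pos' (fun a _ => mul_nonneg (hP0 a).le (Finset.sum_nonneg fun y _ => hnn a y)) 
          ⟨x0, Finset.mem_univ _, mul_pos (hP0 x0) ?_⟩
        refine Finset.sum_pos' (fun y _ => hnn x0 y) ⟨y0, Finset.mem_univ _, ?_⟩
        exact mul_pos (hV _ _) (sub_pos.mpr (hlt.trans_le (hxm y0 x1)))
      rw [h2]
      have : 0 ≤ (1 - δ) * gap P u V (tq u θ) := mul_nonneg (by linarith) hg
      have : 0 < δ * ∑ a, P a * ∑ y, V a y * (u (xm y) y - u a y) := mul_pos hδ0 h3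
      linarith
  · push Not at hnt
    have hcard : (0:ℝ) < Fintype.card X := by
      have : 0 < Fintype.card X := Fintype.card_pos
      positivity
    refine ⟨W, fun _ _ => (Fintype.card X : ℝ)⁻¹, hW, hWsum, fun _ _ => by positivity, 
      fun _ => by simp [hcard.ne'], Or.inl fun x x' y => hnt x' x y, ?_⟩
    have h0 : DD P W W = 0 := by
      have : ∀ a y, W a y / W a y = 1 := fun a y => div_self (hW a y).ne'
      simp [DD, this]
    have h1 : HH P W (fun _ _ => (Fintype.card X : ℝ)⁻¹) = Real.log (Fintype.card X) := by
      unfold HH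
      have hy : ∑ x' : X, (Fintype.card X : ℝ)⁻¹ * -Real.log ((Fintype.card X : ℝ)⁻¹) = 
        Real.log (Fintype.card X) := by
        simp [Real.log_inv, hcard.ne']
      simp only [hy]
      simp only [← Finset.sum_mul, hWsum, hP1, one_mul]
    rw [h0, h1, max_eq_left (by linarith)]
    have := hF 0 0 le_rfl zero_le_one le_rfl
    have h2 : ff P W u c 0 0 = 0 := by simp [ff, ZZ, hWsum]
    linarith
end E

lemma utheta_eq {X Y : Type*} [Fintype X] (U : X → Y → ℝ) (hU : ∀ x y, 0 < U x y) (θ : ℝ) 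
    (x : X) (y : Y) : Utheta U θ x y = tq (fun x y => Real.log (U x y)) θ y x := by
  have h : ∀ x, U x y ^ θ = Real.exp (θ * Real.log (U x y)) := fun x => by
    rw [Real.rpow_def_of_pos (hU x y), mul_comm]
  unfold Utheta tq
  simp only [h]

lemma expo_eq {X Y : Type*} [Fintype X] [Fintype Y] [Nonempty X] [Nonempty Y] 
    (P : X → ℝ) (W U : X → Y → ℝ) (hU : ∀ x y, 0 < U x y) (d ρ θ : ℝ) : 
    -∑ x, P x * Real.logb 2 (∑ y, W x y / Utheta U θ x y ^ ρ) + ρ * d = 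
      ff P W (fun x y => Real.log (U x y)) (d * Real.log 2) ρ θ / Real.log 2 := by
  have hl : Real.log 2 ≠ 0 := (Real.log_pos one_lt_two).ne'
  have h1 : ∀ x y, W x y / Utheta U θ x y ^ ρ = 
      W x y * Real.exp (ρ * ell (fun x y => Real.log (U x y)) θ x y) := by
    intro x y
    rw [utheta_eq U hU, Real.rpow_def_of_pos (tq_pos _ _ _ _), log_tq, div_eq_mul_inv, ← Real.exp_neg]
    congr 2; ring
  unfold ff ZZ
  simp only [h1, Real.logb, mul_div_assoc', ← Finset.sum_div]
  field_simp

lemma sum_ratio_eq {X Y : Type*} [Fintype X] [Fintype Y] [Nonempty X] [Nonempty Y] 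
    (U : X → Y → ℝ) (hU : ∀ x y, 0 < U x y) (ρ θ : ℝ) (a : X) (y : Y) : 
    (∑ x', (U x' y / U a y) ^ θ) ^ ρ = Real.exp (ρ * ell (fun x y => Real.log (U x y)) θ a y) := by
  have h : ∀ x', (U x' y / U a y) ^ θ = 
      Real.exp (θ * Real.log (U x' y)) / Real.exp (θ * Real.log (U a y)) := fun x' => by
    rw [Real.rpow_def_of_pos (div_pos (hU _ _) (hU _ _)), Real.log_div (hU _ _).ne' (hU _ _).ne', 
      ← Real.exp_sub]
    congr 1; ring
  simp only [h, ← Finset.sum_div]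
  have hp : 0 < ∑ x', Real.exp (θ * Real.log (U x' y)) := 
    part_pos (fun x y => Real.log (U x y)) θ y
  rw [Real.rpow_def_of_pos (div_pos hp (Real.exp_pos _)), 
    Real.log_div hp.ne' (Real.exp_pos _).ne', Real.log_exp, mul_comm]
  rfl

/-- The random coding error exponent of the ensemble of random (affine)
linear codes over GF(2), where the encoder transmits a fixed codeword of constant
composition `P_X` and the decoder uses the additive metric `U` over the *whole* linear
code, equals
`E_r(R,U) = max_{ρ∈[0,1]} sup_{θ≥0} { −Σ_x P_X(x) log₂( Σ_y W(y|x)/U_θ(x|y)^ρ )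
+ ρ(H(P_X) − R) }`, with `R = H(P_X) − m(1 − r_fec)`.
The limit is taken along blocklengths `n` for which `n·P_X` is integral and the
transmitted codeword `xseq n` has exact type `P_X`. -/
theorem error_exponent_of_mismatched_linear_code
    {X Y : Type*} [Fintype X] [Fintype Y] [Nonempty X] [Nonempty Y] [DecidableEq X]
    (m : ℕ) (hm : 0 < m) (hcard : Fintype.card X = 2 ^ m)
    (φ : (Fin m → ZMod 2) → X) (hφ : Function.Bijective φ)
    (P : X → ℝ) (hP0 : ∀ x, 0 < P x) (hP1 : ∑ x, P x = 1)
    (hPrat : ∀ x, ∃ q : ℚ, (q : ℝ) = P x)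
    (W : X → Y → ℝ) (hW : ∀ x y, 0 < W x y) (hWsum : ∀ x, ∑ y, W x y = 1)
    (U : X → Y → ℝ) (hU : ∀ x y, 0 < U x y)
    (rfec : ℝ) (hrfec : rfec ∈ Set.Ioc (0:ℝ) 1)
    (R : ℝ) (hR : R = entropy2 P - m * (1 - rfec))
    (k : ℕ → ℕ)
    (hk : Filter.Tendsto (fun n : ℕ => (k n : ℝ) / (n * m)) Filter.atTop (nhds rfec))
    (xseq : ∀ n : ℕ, Fin n → X)
    (wseq : ∀ n : ℕ, Fin (k n) → ZMod 2)
    (S : Set ℕ)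
    (hS : S = {n : ℕ | ∀ a : X,
      (((Finset.univ.filter fun i : Fin n => xseq n i = a).card : ℝ)) = n * P a})
    (Pe : ℕ → ℝ)
    (hPe : ∀ n : ℕ, Pe n =
      ∑ y : Fin n → Y,
        (∏ i, W (xseq n i) (y i)) *
          ((Nat.card {ω : Matrix (Fin (k n)) (Fin n × Fin m) (ZMod 2) ×
                ((Fin n × Fin m) → ZMod 2) //
              (∃ w', w' ≠ wseq n ∧
                (∏ i, U (xseq n i) (y i)) ≤
                  ∏ i, U (φ fun j => (Matrix.vecMul w' ω.1 + ω.2) (i, j)) (y i)) ∧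
              (fun i : Fin n => φ fun j => (Matrix.vecMul (wseq n) ω.1 + ω.2) (i, j)) =
                xseq n} : ℝ) /
            (Nat.card {ω : Matrix (Fin (k n)) (Fin n × Fin m) (ZMod 2) ×
                ((Fin n × Fin m) → ZMod 2) //
              (fun i : Fin n => φ fun j => (Matrix.vecMul (wseq n) ω.1 + ω.2) (i, j)) =
                xseq n} : ℝ))) :
    Filter.Tendsto (fun n : ℕ => -(1 / (n : ℝ)) * Real.logb 2 (Pe n))
      (Filter.atTop ⊓ Filter.principal S)
      (nhds (⨆ ρ : Set.Icc (0:ℝ) 1, ⨆ θ : Set.Ici (0:ℝ),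
        (-∑ x, P x * Real.logb 2 (∑ y, W x y / Utheta U θ.1 x y ^ (ρ.1 : ℝ))
          + ρ.1 * (entropy2 P - R)))) := by
  classical
  have hl2 : 0 < Real.log 2 := Real.log_pos one_lt_two
  set u : X → Y → ℝ := fun x y => Real.log (U x y) with hu
  have hmR : (0:ℝ) < m := by exact_mod_cast hm
  set c : ℝ := m * (1 - rfec) * Real.log 2 with hcdef
  have hc0 : 0 ≤ c := by
    have := hrfec.2
    have : 0 ≤ 1 - rfec := by linarith
    positivity
  have hcX : c ≤ Real.log (Fintype.card X) := by
    rw [hcard]; push_cast; rw [Real.log_pow, hcdef]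
    have := hrfec.1
    have : (m:ℝ) * (1 - rfec) ≤ m := by nlinarith
    gcongr
  have hexp : ∀ ρ θ : ℝ, 
      (-∑ x, P x * Real.logb 2 (∑ y, W x y / Utheta U θ x y ^ ρ) + ρ * (entropy2 P - R)) = 
      ff P W u c ρ θ / Real.log 2 := by
    intro ρ θ
    have : entropy2 P - R = m * (1 - rfec) := by rw [hR]; ring
    rw [this, expo_eq P W U hU]
  simp only [hexp]
  set F2 : ℝ := ⨆ ρ : Set.Icc (0:ℝ) 1, ⨆ θ : Set.Ici (0:ℝ), ff P W u c ρ.1 θ.1 / Real.log 2 with hF2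
  have hfc : ∀ ρ θ, 0 ≤ ρ → ρ ≤ 1 → ff P W u c ρ θ ≤ c := by
    intro ρ θ hρ hρ1
    unfold ff
    have h1 : 0 ≤ ∑ x, P x * Real.log (ZZ W u ρ θ x) := Finset.sum_nonneg fun x _ => 
      mul_nonneg (hP0 x).le (Real.log_nonneg (ZZ_one_le W u hW hWsum ρ θ hρ x))
    have h2 : ρ * c ≤ c := mul_le_of_le_one_left hc0 hρ1
    linarith
  have : Nonempty (Set.Icc (0:ℝ) 1) := ⟨⟨0, le_rfl, zero_le_one⟩⟩
  have : Nonempty (Set.Ici (0:ℝ)) := ⟨⟨0, Set.mem_Ici.mpr le_rfl⟩⟩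
  have hbd1 : ∀ ρ : Set.Icc (0:ℝ) 1, 
      BddAbove (Set.range fun θ : Set.Ici (0:ℝ) => ff P W u c ρ.1 θ.1 / Real.log 2) := by
    intro ρ
    refine ⟨c / Real.log 2, ?_⟩
    rintro _ ⟨θ, rfl⟩
    exact div_le_div_of_nonneg_right (hfc _ _ ρ.2.1 ρ.2.2) hl2.le
  have hbd2 : BddAbove (Set.range fun ρ : Set.Icc (0:ℝ) 1 => 
      ⨆ θ : Set.Ici (0:ℝ), ff P W u c ρ.1 θ.1 / Real.log 2) := by
    refine ⟨c / Real.log 2, ?_⟩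
    rintro _ ⟨ρ, rfl⟩
    exact ciSup_le fun θ => div_le_div_of_nonneg_right (hfc _ _ ρ.2.1 ρ.2.2) hl2.le
  have hF : ∀ ρ θ, 0 ≤ ρ → ρ ≤ 1 → 0 ≤ θ → ff P W u c ρ θ ≤ F2 * Real.log 2 := by
    intro ρ θ h1 h2 h3
    rw [← div_le_iff₀ hl2]
    exact (le_ciSup (hbd1 ⟨ρ, h1, h2⟩) ⟨θ, h3⟩).trans (le_ciSup hbd2 ⟨ρ, h1, h2⟩)
  -- bounds on `Pe`
  set K : ℕ → ℝ := fun n => ((2:ℝ) ^ k n - 1) / 2 ^ (n * m) with hK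
  have hPeB : ∀ n, Pe n ≤ Ess W U (K n) (xseq n) ∧ Ess W U (K n) (xseq n) / 2 ≤ Pe n := by
    intro n
    have key : ∀ y : Fin n → Y, _ := fun y => cond_bounds m n (k n) φ hφ (xseq n) (wseq n) 
      (fun x' => (∏ i, U (xseq n i) (y i)) ≤ ∏ i, U (x' i) (y i)) ((2:ℝ) ^ k n - 1) _ _ rfl rfl rfl
    have hKp : ∀ N : ℝ, ((2:ℝ) ^ k n - 1) * (N / 2 ^ (n * m)) = K n * N := by
      intro N; simp only [hK]; ring
    rw [hPe n]
    unfold Ess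
    constructor
    · refine Finset.sum_le_sum fun y _ => ?_
      refine mul_le_mul_of_nonneg_left ?_ (Finset.prod_nonneg fun i _ => (hW _ _).le)
      have := (key y).1
      rw [hKp] at this
      convert this
    · rw [Finset.sum_div]
      refine Finset.sum_le_sum fun y _ => ?_
      rw [mul_div_assoc]
      refine mul_le_mul_of_nonneg_left ?_ (Finset.prod_nonneg fun i _ => (hW _ _).le)
      have := (key y).2
      rw [hKp] at this
      convert this
  -- normalised rates
  set a : ℕ → ℝ := fun n => m * (1 - (k n : ℝ) / (n * m)) * Real.log 2 with ha
  have hac : Filter.Tendsto a Filter.atTop (nhds c) := 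
    ((hk.const_sub 1).const_mul (m:ℝ)).mul_const (Real.log 2)
  have hkpos : ∀ᶠ n in Filter.atTop, 1 ≤ k n := by
    filter_upwards [hk.eventually (lt_mem_nhds hrfec.1)] with n hn
    by_contra hcon
    have : k n = 0 := by omega
    simp [this] at hn
  have hna : ∀ n : ℕ, 0 < n → n * a n = (n * m - k n) * Real.log 2 := by
    intro n hn
    have : (0:ℝ) < n := by exact_mod_cast hn
    simp only [ha]
    field_simp
  have hKpos : ∀ n, 1 ≤ k n → 0 < K n := by
    intro n hn
    simp only [hK]
    have : (1:ℝ) < 2 ^ k n := one_lt_pow₀ one_lt_two (by omega)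
    have : (0:ℝ) < 2 ^ k n - 1 := by linarith
    positivity
  have hKup : ∀ n : ℕ, 0 < n → 1 ≤ k n → Real.log (K n) ≤ -(n * a n) := by
    intro n hn hkn
    have h1 : K n ≤ 2 ^ k n / 2 ^ (n * m) := by
      simp only [hK]; gcongr; linarith
    have h2 := Real.log_le_log (hKpos n hkn) h1
    have h3 : Real.log ((2:ℝ) ^ k n / 2 ^ (n * m)) = k n * Real.log 2 - (n * m : ℕ) * Real.log 2 := by
      rw [Real.log_div (by positivity) (by positivity), Real.log_pow, Real.log_pow]
    rw [h3] at h2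
    rw [hna n hn]; push_cast at h2; linarith
  have hKlo : ∀ n : ℕ, 0 < n → 1 ≤ k n → -(n * a n) - Real.log 2 ≤ Real.log (K n) := by
    intro n hn hkn
    have h1 : 2 ^ k n / 2 ^ (n * m) / 2 ≤ K n := by
      simp only [hK]
      rw [div_right_comm]
      gcongr
      have : (2:ℝ) ≤ 2 ^ k n := by
        calc (2:ℝ) = 2 ^ 1 := by norm_num
          _ ≤ 2 ^ k n := pow_le_pow_right₀ one_le_two hkn
      linarith
    have h2 := Real.log_le_log (by positivity) h1
    rw [Real.log_div (by positivity) (by positivity), Real.log_div (by positivity) (by positivity), 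
      Real.log_pow, Real.log_pow] at h2
    rw [hna n hn]; push_cast at h2; linarith
  have hSt : ∀ n ∈ S, HasType P (xseq n) := by
    intro n hn; rw [hS] at hn; exact hn
  have hEss0 : ∀ n, 1 ≤ k n → 0 < Ess W U (K n) (xseq n) := by
    intro n hkn
    unfold Ess
    refine Finset.sum_pos (fun y _ => mul_pos (Finset.prod_pos fun i _ => hW _ _) ?_) 
      Finset.univ_nonempty
    refine lt_min zero_lt_one (mul_pos (hKpos n hkn) ?_)
    rw [Nat.cast_pos, Finset.card_pos]
    exact ⟨xseq n, by simp⟩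
  have hlower : ∀ ρ θ, 0 ≤ ρ → ρ ≤ 1 → 0 ≤ θ → ∀ n ∈ S, 0 < n → 1 ≤ k n → 
      ff P W u (a n) ρ θ ≤ -(1 / (n:ℝ)) * Real.log (Pe n) := by
    intro ρ θ h1 h2 h3 n hn hn0 hkn
    have hnR : (0:ℝ) < n := by exact_mod_cast hn0
    have hach := achiev P W U hW hU (K n) (hKpos n hkn) ρ θ h1 h2 h3 (xseq n) (hSt n hn)
    simp only [sum_ratio_eq U hU] at hach
    have hPe0 : 0 < Pe n := (half_pos (hEss0 n hkn)).trans_le (hPeB n).2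
    have h4 := Real.log_le_log hPe0 ((hPeB n).1.trans hach)
    rw [Real.log_mul (Real.rpow_pos_of_pos (hKpos n hkn) _).ne' (Real.exp_pos _).ne', Real.log_exp, 
      Real.log_rpow (hKpos n hkn)] at h4
    have h5 := mul_le_mul_of_nonneg_left (hKup n hn0 hkn) h1
    have h6 : n * ff P W u (a n) ρ θ ≤ -Real.log (Pe n) := by
      have : n * ff P W u (a n) ρ θ = -(n * ∑ x, P x * Real.log (ZZ W u ρ θ x)) + ρ * (n * a n) := by
        unfold ff; ring
      rw [this]
      unfold ZZ
      linarith
    calc ff P W u (a n) ρ θ = (1 / (n:ℝ)) * (n * ff P W u (a n) ρ θ) := by field_simp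
      _ ≤ (1 / (n:ℝ)) * (-Real.log (Pe n)) := by gcongr
      _ = _ := by ring
  have hupper : ∀ ε > 0, ∀ᶠ n in Filter.atTop, n ∈ S → 
      -(1 / (n:ℝ)) * Real.log (Pe n) ≤ F2 * Real.log 2 + 5 * ε := by
    intro ε hε
    obtain ⟨V, Q, hV, hV1, hQ, hQ1, hg, hval⟩ := 
      exists_good P hP0 hP1 W u hW hWsum c (F2 * Real.log 2) hc0 hcX hF ε hε
    obtain ⟨N, hN⟩ := converse P hP1 W U hW hU V hV hV1 Q hQ hQ1 (by
      rcases hg with hg | hg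
      · exact Or.inl fun x x' y => (Real.log_le_log_iff (hU _ _) (hU _ _)).mp (hg x x' y)
      · exact Or.inr hg) (DD P W V) (HH P V Q) ε hε rfl rfl
    have hlim : Filter.Tendsto (fun n : ℕ => 3 * Real.log 2 / (n:ℝ)) Filter.atTop (nhds 0) := 
      tendsto_const_div_atTop_nhds_zero_nat _
    filter_upwards [Filter.eventually_ge_atTop N, Filter.eventually_gt_atTop 0, hkpos, 
      hlim.eventually (gt_mem_nhds hε), hac.eventually (gt_mem_nhds (lt_add_of_pos_right c hε))] 
      with n hnN hn0 hkn hsm han hnS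
    have hnR : (0:ℝ) < n := by exact_mod_cast hn0
    have h1 := hN n hnN (xseq n) (hSt n hnS) (K n) (hKpos n hkn)
    set D := DD P W V
    set H := HH P V Q
    have hKn := hKpos n hkn
    have hminlog : -(n * max 0 (a n - H + ε)) - Real.log 2 ≤ 
        Real.log (min 1 (K n * Real.exp (n * (H - ε)))) := by
      have hmx0 : 0 ≤ n * max 0 (a n - H + ε) := mul_nonneg hnR.le (le_max_left _ _)
      rcases min_cases (1:ℝ) (K n * Real.exp (n * (H - ε))) with h | h <;> rw [h.1]
      · rw [Real.log_one]; linarith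
      · rw [Real.log_mul hKn.ne' (Real.exp_pos _).ne', Real.log_exp]
        have h2 := hKlo n hn0 hkn
        have h3 : n * (a n - H + ε) ≤ n * max 0 (a n - H + ε) := by gcongr; exact le_max_right _ _
        nlinarith
    have hmin0 : 0 < min 1 (K n * Real.exp (n * (H - ε))) := lt_min zero_lt_one (by positivity)
    have h2 : (1/2) * (1 / 2 * (Real.exp (-(n * (D + ε))) * min 1 (K n * Real.exp (n * (H - ε))))) 
        ≤ Pe n := by
      have := (hPeB n).2
      linarith
    have h3 := Real.log_le_log (by positivity) h2
    rw [Real.log_mul (by positivity) (by positivity), Real.log_mul (by positivity) (by positivity), 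
      Real.log_mul (Real.exp_pos _).ne' hmin0.ne', Real.log_exp, one_div, Real.log_inv] at h3
    have h4 : -Real.log (Pe n) ≤ n * (3 * Real.log 2 / n + (D + ε) + max 0 (a n - H + ε)) := by
      have : n * (3 * Real.log 2 / n + (D + ε) + max 0 (a n - H + ε)) = 
        3 * Real.log 2 + n * (D + ε) + n * max 0 (a n - H + ε) := by field_simp
      rw [this]; linarith
    have h5 : max 0 (a n - H + ε) ≤ max 0 (c - H) + 2 * ε := by
      refine max_le ?_ ?_
      · have := le_max_left 0 (c - H); linarith
      · have := le_max_right 0 (c - H); linarith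
    calc -(1 / (n:ℝ)) * Real.log (Pe n) = (1 / (n:ℝ)) * (-Real.log (Pe n)) := by ring
      _ ≤ (1 / (n:ℝ)) * (n * (3 * Real.log 2 / n + (D + ε) + max 0 (a n - H + ε))) := by gcongr
      _ = 3 * Real.log 2 / n + (D + ε) + max 0 (a n - H + ε) := by field_simp
      _ ≤ _ := by linarith
  have hlogb : ∀ n : ℕ, -(1 / (n:ℝ)) * Real.logb 2 (Pe n) = 
      (-(1 / (n:ℝ)) * Real.log (Pe n)) / Real.log 2 := by
    intro n; unfold Real.logb; ring
  simp only [hlogb]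
  rw [tendsto_order]
  constructor
  · intro b hb
    obtain ⟨ρ, hρ⟩ := exists_lt_of_lt_ciSup hb
    obtain ⟨θ, hθ⟩ := exists_lt_of_lt_ciSup hρ
    rw [lt_div_iff₀ hl2] at hθ
    have hcont : Filter.Tendsto (fun n => ff P W u (a n) ρ.1 θ.1) Filter.atTop 
        (nhds (ff P W u c ρ.1 θ.1)) := by
      unfold ff
      exact (hac.const_mul ρ.1).const_add _
    rw [Filter.eventually_inf_principal]
    filter_upwards [hcont.eventually (lt_mem_nhds hθ), hkpos, Filter.eventually_gt_atTop 0] 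
      with n h1 h2 h3 hn
    rw [lt_div_iff₀ hl2]
    exact h1.trans_le (hlower ρ.1 θ.1 ρ.2.1 ρ.2.2 θ.2 n hn h3 h2)
  · intro b hb
    rw [Filter.eventually_inf_principal]
    have hε : 0 < (b - F2) * Real.log 2 / 10 := by
      have : 0 < b - F2 := by linarith
      positivity
    filter_upwards [hupper _ hε] with n h1 hn
    rw [div_lt_iff₀ hl2]
    have := h1 hn
    nlinarith
end

section
/- Let X and Y be finite nonempty alphabets, P_X a probability mass function on X, and W a channel with W(y|x) > 0 for all x, y and Σ_y W(y|x) = 1 for each x. Let U : X×Y → (0,∞) and for θ ≥ 0 set U_θ(x|y) = U(x,y)^θ / Σ_{x'} U(x',y)^θ. Then for every R ∈ ℝ, max_{ρ∈[0,1]} sup_{θ≥0} { −Σ_x P_X(x) log₂( Σ_y W(y|x) / U_θ(x|y)^ρ ) + ρ(H(P_X) − R) } ≤ min over channels Q (Q(y|x) ≥ 0, Σ_y Q(y|x) = 1) of { D(Q‖W|P_X) + [ I_Q(X;Y) − R ]_+ }. -/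
/-- Weighted conditional divergence `D(Q‖W|P_X)` (base-2 logarithm). -/
noncomputable def condDiv2 {X Y : Type*} [Fintype X] [Fintype Y]
    (P : X → ℝ) (Q W : X → Y → ℝ) : ℝ :=
  ∑ x, P x * ∑ y, Q x y * Real.logb 2 (Q x y / W x y)

/-- Mutual information `I_Q(X;Y)` of the joint distribution `P_X(x) Q(y|x)` (base 2). -/
noncomputable def mutInfo2 {X Y : Type*} [Fintype X] [Fintype Y]
    (P : X → ℝ) (Q : X → Y → ℝ) : ℝ :=
  ∑ x, ∑ y, P x * Q x y * Real.logb 2 (Q x y / ∑ x', P x' * Q x' y)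

theorem aux_gibbs {ι : Type*} [Fintype ι] (p a : ι → ℝ) (hp : ∀ i, 0 ≤ p i)
    (ha : ∀ i, 0 ≤ a i) (hac : ∀ i, a i = 0 → p i = 0) (hp1 : ∑ i, p i = 1) :
    -Real.logb 2 (∑ i, a i) ≤ ∑ i, p i * Real.logb 2 (p i / a i) := by
  have hA : 0 < ∑ i, a i := by
    have h0 : 0 ≤ ∑ i, a i := Finset.sum_nonneg (fun i _ => ha i)
    rcases h0.lt_or_eq with h | h
    · exact h
    · exfalso
      have h2 := (Finset.sum_eq_zero_iff_of_nonneg (fun i _ => ha i)).1 h.symm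
      have h3 : ∑ i, p i = 0 := Finset.sum_eq_zero (fun i hi => hac i (h2 i hi))
      linarith
  set A := ∑ i, a i with hAdef
  have hl : 0 < Real.log 2 := Real.log_pos (by norm_num)
  have key : ∀ i, p i - a i / A ≤ p i * Real.log (p i / a i) + p i * Real.log A := by
    intro i
    rcases (hp i).lt_or_eq with h | h
    · have hai : 0 < a i := lt_of_le_of_ne (ha i) (fun h0 => h.ne' (hac i h0.symm))
      have h1 := Real.one_sub_inv_le_log_of_pos (x := p i / a i * A) (by positivity)
      rw [Real.log_mul (by positivity) hA.ne'] at h1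
      have h2 := mul_le_mul_of_nonneg_left h1 h.le
      have h3 : p i * (1 - (p i / a i * A)⁻¹) = p i - a i / A := by field_simp
      linarith
    · rw [← h]
      have : 0 ≤ a i / A := div_nonneg (ha i) hA.le
      simpa using this
  have hs := Finset.sum_le_sum (fun i (_ : i ∈ Finset.univ) => key i)
  rw [Finset.sum_sub_distrib, Finset.sum_add_distrib, ← Finset.sum_div, ← Finset.sum_mul, hp1,
    ← hAdef, div_self hA.ne'] at hs
  have e : ∑ i, p i * Real.logb 2 (p i / a i) = (∑ i, p i * Real.log (p i / a i)) / Real.log 2 := by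
    rw [Finset.sum_div]
    exact Finset.sum_congr rfl (fun i _ => by unfold Real.logb; ring)
  rw [e, Real.logb, ← neg_div]
  exact div_le_div_of_nonneg_right (by linarith) hl.le

/-- For any additive decoding metric `U`, the exponent
`max_{ρ∈[0,1]} sup_{θ≥0} { −Σ_x P_X(x) log₂( Σ_y W(y|x)/U_θ(x|y)^ρ ) + ρ(H(P_X) − R) }`
is at most the constant-composition random coding exponent
`min_Q { D(Q‖W|P_X) + [I_Q(X;Y) − R]_+ }`. -/
theorem exponent_upper_bounded_by_cc_exponent
    {X Y : Type*} [Fintype X] [Fintype Y] [Nonempty X] [Nonempty Y]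
    (P : X → ℝ) (hP0 : ∀ x, 0 ≤ P x) (hP1 : ∑ x, P x = 1)
    (W : X → Y → ℝ) (hW : ∀ x y, 0 < W x y) (hWsum : ∀ x, ∑ y, W x y = 1)
    (U : X → Y → ℝ) (hU : ∀ x y, 0 < U x y) (R : ℝ) :
    (⨆ ρ : Set.Icc (0:ℝ) 1, ⨆ θ : Set.Ici (0:ℝ),
        (-∑ x, P x * Real.logb 2 (∑ y, W x y / Utheta U θ.1 x y ^ (ρ.1 : ℝ))
          + ρ.1 * (entropy2 P - R))) ≤
      ⨅ Q : {Q : X → Y → ℝ // (∀ x y, 0 ≤ Q x y) ∧ ∀ x, ∑ y, Q x y = 1},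
        condDiv2 P Q.1 W + max (mutInfo2 P Q.1 - R) 0 := by
  haveI : Nonempty {Q : X → Y → ℝ // (∀ x y, 0 ≤ Q x y) ∧ ∀ x, ∑ y, Q x y = 1} :=
    ⟨⟨W, fun x y => (hW x y).le, hWsum⟩⟩
  haveI : Nonempty (Set.Icc (0:ℝ) 1) := ⟨⟨0, by simp⟩⟩
  haveI : Nonempty (Set.Ici (0:ℝ)) := ⟨⟨0, by simp⟩⟩
  refine le_ciInf fun Q => ciSup_le fun ρ => ciSup_le fun θ => ?_
  obtain ⟨Q, hQ0, hQ1⟩ := Q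
  obtain ⟨ρ, hρ0, hρ1⟩ := ρ
  obtain ⟨θ, hθ⟩ := θ
  dsimp only
  have hS : ∀ y, 0 < ∑ x', U x' y ^ θ := fun y =>
    Finset.sum_pos (fun x _ => Real.rpow_pos_of_pos (hU x y) θ) Finset.univ_nonempty
  have hV : ∀ x y, 0 < Utheta U θ x y := fun x y =>
    div_pos (Real.rpow_pos_of_pos (hU x y) θ) (hS y)
  have hV1 : ∀ y, ∑ x, Utheta U θ x y = 1 := fun y => by
    unfold Utheta
    rw [← Finset.sum_div, div_self (hS y).ne']
  generalize Utheta U θ = V at hV hV1 ⊢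
  -- step 1
  have s1 : ∀ x, -Real.logb 2 (∑ y, W x y / V x y ^ ρ) ≤
      ∑ y, Q x y * Real.logb 2 (Q x y / W x y) + ρ * ∑ y, Q x y * Real.logb 2 (V x y) := by
    intro x
    have hpos : ∀ y, 0 < W x y / V x y ^ ρ := fun y =>
      div_pos (hW x y) (Real.rpow_pos_of_pos (hV x y) ρ)
    refine (aux_gibbs (Q x) (fun y => W x y / V x y ^ ρ) (hQ0 x) (fun y => (hpos y).le)
      (fun y h => absurd h (hpos y).ne') (hQ1 x)).trans (le_of_eq ?_)
    rw [Finset.mul_sum, ← Finset.sum_add_distrib]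
    refine Finset.sum_congr rfl fun y _ => ?_
    rcases (hQ0 x y).lt_or_eq with h | h
    · have hr := Real.rpow_pos_of_pos (hV x y) ρ
      have hw := hW x y
      have : Q x y / (W x y / V x y ^ ρ) = Q x y / W x y * V x y ^ ρ := by field_simp
      rw [this, Real.logb_mul (by positivity) hr.ne', Real.logb_rpow_eq_mul_logb_of_pos (hV x y)]
      ring
    · simp [← h]
  -- step 2
  have hq0 : ∀ y, 0 ≤ ∑ x', P x' * Q x' y := fun y =>
    Finset.sum_nonneg fun x _ => mul_nonneg (hP0 x) (hQ0 x y)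
  have s2 : entropy2 P + ∑ x, P x * ∑ y, Q x y * Real.logb 2 (V x y) ≤ mutInfo2 P Q := by
    have g := aux_gibbs (ι := X × Y) (fun z => P z.1 * Q z.1 z.2)
      (fun z => (∑ x', P x' * Q x' z.2) * V z.1 z.2)
      (fun z => mul_nonneg (hP0 _) (hQ0 _ _)) (fun z => mul_nonneg (hq0 _) (hV _ _).le)
      (fun z h => by
        rcases mul_eq_zero.1 h with h | h
        · exact (Finset.sum_eq_zero_iff_of_nonneg
            (fun x _ => mul_nonneg (hP0 x) (hQ0 x z.2))).1 h z.1 (Finset.mem_univ _)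
        · exact absurd h (hV _ _).ne')
      (by
        rw [Fintype.sum_prod_type]
        simp only [← Finset.mul_sum, hQ1, mul_one, hP1])
    have hsum : ∑ z : X × Y, (∑ x', P x' * Q x' z.2) * V z.1 z.2 = 1 := by
      rw [Fintype.sum_prod_type_right]
      simp only [← Finset.mul_sum, hV1, mul_one]
      rw [Finset.sum_comm]
      simp only [← Finset.mul_sum, hQ1, mul_one, hP1]
    rw [hsum, Real.logb_one, neg_zero, Fintype.sum_prod_type] at g
    have hH : entropy2 P = -∑ x, ∑ y, P x * Q x y * Real.logb 2 (P x) := by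
      unfold entropy2
      congr 1
      refine Finset.sum_congr rfl fun x _ => ?_
      rw [← Finset.sum_mul, ← Finset.mul_sum, hQ1, mul_one]
    have e : ∑ x, ∑ y, P x * Q x y *
        Real.logb 2 (P x * Q x y / ((∑ x', P x' * Q x' y) * V x y)) =
        mutInfo2 P Q - entropy2 P - ∑ x, P x * ∑ y, Q x y * Real.logb 2 (V x y) := by
      rw [hH, sub_neg_eq_add]
      unfold mutInfo2
      rw [← Finset.sum_add_distrib, ← Finset.sum_sub_distrib]
      refine Finset.sum_congr rfl fun x _ => ?_
      rw [Finset.mul_sum, ← Finset.sum_add_distrib, ← Finset.sum_sub_distrib]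
      refine Finset.sum_congr rfl fun y _ => ?_
      rcases (mul_nonneg (hP0 x) (hQ0 x y)).lt_or_eq with h | h
      · have hP : 0 < P x := lt_of_le_of_ne (hP0 x) (fun h0 => by simp [← h0] at h)
        have hQ : 0 < Q x y := lt_of_le_of_ne (hQ0 x y) (fun h0 => by simp [← h0] at h)
        have hq : 0 < ∑ x', P x' * Q x' y := lt_of_lt_of_le h
          (Finset.single_le_sum (f := fun x' => P x' * Q x' y)
            (fun x _ => mul_nonneg (hP0 x) (hQ0 x y)) (Finset.mem_univ x))
        have hv := hV x y
        rw [Real.logb_div h.ne' (by positivity), Real.logb_mul hP.ne' hQ.ne',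
          Real.logb_mul hq.ne' hv.ne', Real.logb_div hQ.ne' hq.ne']
        ring
      · rw [← mul_assoc (P x) (Q x y), ← h]
        ring
    rw [e] at g
    linarith
  have s3 : -∑ x, P x * Real.logb 2 (∑ y, W x y / V x y ^ ρ) ≤
      condDiv2 P Q W + ρ * ∑ x, P x * ∑ y, Q x y * Real.logb 2 (V x y) := by
    unfold condDiv2
    rw [← Finset.sum_neg_distrib, Finset.mul_sum, ← Finset.sum_add_distrib]
    refine Finset.sum_le_sum fun x _ => ?_
    have := mul_le_mul_of_nonneg_left (s1 x) (hP0 x)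
    linarith
  have s4 : ρ * (mutInfo2 P Q - R) ≤ max (mutInfo2 P Q - R) 0 :=
    (mul_le_mul_of_nonneg_left (le_max_left _ 0) hρ0).trans
      (mul_le_of_le_one_left (le_max_right _ _) hρ1)
  have s5 := mul_le_mul_of_nonneg_left s2 hρ0
  linarith
end

section
/- Let X and Y be finite nonempty alphabets, P_X a probability mass function on X with P_X(x) > 0 for all x, and W a channel with W(y|x) > 0 for all x, y and Σ_y W(y|x) = 1 for each x, and fix R ∈ ℝ. Suppose that for every ρ ∈ [0,1] there exists a vector Z_ρ : X → (0,∞) satisfying Z_ρ(x) = Σ_y W(y|x)^{1/(1+ρ)} [ Σ_{x'} P_X(x') W(y|x')^{1/(1+ρ)} / Z_ρ(x') ]^ρ for all x ∈ X. Define U(x|y,ρ) = ( P_X(x) W(y|x)^{1/(1+ρ)} / Z_ρ(x) ) / ( Σ_{x'} P_X(x') W(y|x')^{1/(1+ρ)} / Z_ρ(x') ), and U_θ(x|y,ρ) = U(x|y,ρ)^θ / Σ_{x'} U(x'|y,ρ)^θ for θ ≥ 0, and let ρ* ∈ [0,1] maximize ρ ↦ sup_{θ≥0} { −Σ_x P_X(x)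 log₂( Σ_y W(y|x) / U_θ(x|y,ρ)^ρ ) + ρ(H(P_X) − R) }. Then max_{ρ∈[0,1]} sup_{θ≥0} { −Σ_x P_X(x) log₂( Σ_y W(y|x) / U_θ(x|y,ρ*)^ρ ) + ρ(H(P_X) − R) } = min over channels Q of { D(Q‖W|P_X) + [ I_Q(X;Y) − R ]_+ }; i.e., the metric U_*(x,y) = U(x|y,ρ*) achieves the random coding error exponent of constant composition codes. -/
/-- The metric `U(x|y,ρ) = (P_X(x) W(y|x)^{1/(1+ρ)}/Z(x)) / Σ_{x'} P_X(x') W(y|x')^{1/(1+ρ)}/Z(x')`. -/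
noncomputable def Uopt {X Y : Type*} [Fintype X] (P : X → ℝ) (W : X → Y → ℝ)
    (Z : X → ℝ) (ρ : ℝ) (x : X) (y : Y) : ℝ :=
  (P x * W x y ^ (1 / (1 + ρ)) / Z x) /
    ∑ x', P x' * W x' y ^ (1 / (1 + ρ)) / Z x'

theorem key_pt (a b t : ℝ) (ha : 0 ≤ a) (hb : 0 ≤ b) (hab : b = 0 → a = 0) (ht : 0 < t) :
    a * Real.logb 2 t + (a - t * b) / Real.log 2 ≤ a * Real.logb 2 (a / b) := by
  have h2 : 0 < Real.log 2 := Real.log_pos (by norm_num)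
  have main : a * Real.log t + (a - t * b) ≤ a * Real.log (a / b) := by
    rcases ha.eq_or_lt with rfl | ha'
    · have := mul_nonneg ht.le hb
      simp; exact this
    · have hb' : 0 < b := lt_of_le_of_ne hb (fun h => ha'.ne' (hab h.symm))
      have h1 := Real.log_le_sub_one_of_pos (show 0 < t * b / a by positivity)
      rw [Real.log_div (by positivity) ha'.ne', Real.log_mul ht.ne' hb'.ne'] at h1
      rw [Real.log_div ha'.ne' hb'.ne']
      have h3 := mul_le_mul_of_nonneg_left h1 ha
      have h4 : a * (t * b / a - 1) = t * b - a := by field_simp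
      nlinarith
  unfold Real.logb
  have h5 := div_le_div_of_nonneg_right main h2.le
  calc _ = (a * Real.log t + (a - t * b)) / Real.log 2 := by ring
    _ ≤ _ := h5
    _ = _ := by ring

theorem logsum (a1 b1 a2 b2 : ℝ) (ha1 : 0 ≤ a1) (hb1 : 0 ≤ b1) (hab1 : b1 = 0 → a1 = 0)
    (ha2 : 0 ≤ a2) (hb2 : 0 ≤ b2) (hab2 : b2 = 0 → a2 = 0) :
    (a1 + a2) * Real.logb 2 ((a1 + a2) / (b1 + b2)) ≤
      a1 * Real.logb 2 (a1 / b1) + a2 * Real.logb 2 (a2 / b2) := by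
  rcases (add_nonneg ha1 ha2).eq_or_lt with h | h
  · have h1 : a1 = 0 := by linarith
    have h2 : a2 = 0 := by linarith
    simp [h1, h2]
  · have hb : 0 < b1 + b2 := by
      rcases (add_nonneg hb1 hb2).eq_or_lt with h' | h'
      · have := hab1 (by linarith)
        have := hab2 (by linarith)
        linarith
      · exact h'
    have k1 := key_pt a1 b1 ((a1 + a2) / (b1 + b2)) ha1 hb1 hab1 (by positivity)
    have k2 := key_pt a2 b2 ((a1 + a2) / (b1 + b2)) ha2 hb2 hab2 (by positivity)
    have e : (a1 - (a1 + a2) / (b1 + b2) * b1) / Real.log 2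
        + (a2 - (a1 + a2) / (b1 + b2) * b2) / Real.log 2 = 0 := by
      rw [← add_div]
      have : a1 - (a1 + a2) / (b1 + b2) * b1 + (a2 - (a1 + a2) / (b1 + b2) * b2) = 0 := by
        field_simp
        ring
      rw [this, zero_div]
    nlinarith

def IsCh {X Y : Type*} [Fintype Y] (Q : X → Y → ℝ) : Prop :=
  (∀ x y, 0 ≤ Q x y) ∧ ∀ x, ∑ y, Q x y = 1

section
variable {X Y : Type*} [Fintype X] [Fintype Y]

theorem IsCh.mix {Q1 Q2 : X → Y → ℝ} (h1 : IsCh Q1) (h2 : IsCh Q2) {l m : ℝ}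
    (hl : 0 ≤ l) (hm : 0 ≤ m) (hlm : l + m = 1) :
    IsCh (fun x y => l * Q1 x y + m * Q2 x y) := by
  refine ⟨fun x y => add_nonneg (mul_nonneg hl (h1.1 x y)) (mul_nonneg hm (h2.1 x y)),
    fun x => ?_⟩
  rw [Finset.sum_add_distrib, ← Finset.mul_sum, ← Finset.mul_sum, h1.2, h2.2]
  linarith

theorem condDiv_convex (P : X → ℝ) (hP0 : ∀ x, 0 < P x)
    (W : X → Y → ℝ) (hW : ∀ x y, 0 < W x y)
    {Q1 Q2 : X → Y → ℝ} (h1 : IsCh Q1) (h2 : IsCh Q2) {l m : ℝ}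
    (hl : 0 < l) (hm : 0 < m) (hlm : l + m = 1) :
    condDiv2 P (fun x y => l * Q1 x y + m * Q2 x y) W ≤
      l * condDiv2 P Q1 W + m * condDiv2 P Q2 W := by
  unfold condDiv2
  simp only [Finset.mul_sum, ← Finset.sum_add_distrib]
  refine Finset.sum_le_sum fun x _ => Finset.sum_le_sum fun y _ => ?_
  have hw := hW x y
  have k := logsum (l * Q1 x y) (l * W x y) (m * Q2 x y) (m * W x y)
    (mul_nonneg hl.le (h1.1 x y)) (by positivity) (fun h => absurd h (by positivity))
    (mul_nonneg hm.le (h2.1 x y)) (by positivity) (fun h => absurd h (by positivity))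
  rw [← add_mul, hlm, one_mul, mul_div_mul_left _ _ hl.ne', mul_div_mul_left _ _ hm.ne'] at k
  have := mul_le_mul_of_nonneg_left k (hP0 x).le
  linarith

theorem out_zero (P : X → ℝ) (hP0 : ∀ x, 0 < P x) {Q : X → Y → ℝ} (h : IsCh Q) (x : X) (y : Y)
    (h0 : ∑ x', P x' * Q x' y = 0) : Q x y = 0 := by
  have := (Finset.sum_eq_zero_iff_of_nonneg
    (fun x' _ => mul_nonneg (hP0 x').le (h.1 x' y))).1 h0 x (Finset.mem_univ _)
  exact (mul_eq_zero.1 this).resolve_left (hP0 x).ne'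

theorem out_nonneg (P : X → ℝ) (hP0 : ∀ x, 0 < P x) {Q : X → Y → ℝ} (h : IsCh Q) (y : Y) :
    0 ≤ ∑ x', P x' * Q x' y :=
  Finset.sum_nonneg fun x' _ => mul_nonneg (hP0 x').le (h.1 x' y)

theorem mutInfo_convex (P : X → ℝ) (hP0 : ∀ x, 0 < P x)
    {Q1 Q2 : X → Y → ℝ} (h1 : IsCh Q1) (h2 : IsCh Q2) {l m : ℝ}
    (hl : 0 < l) (hm : 0 < m) :
    mutInfo2 P (fun x y => l * Q1 x y + m * Q2 x y) ≤
      l * mutInfo2 P Q1 + m * mutInfo2 P Q2 := by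
  unfold mutInfo2
  simp only [Finset.mul_sum, ← Finset.sum_add_distrib]
  refine Finset.sum_le_sum fun x _ => Finset.sum_le_sum fun y _ => ?_
  have k := logsum (l * Q1 x y) (l * ∑ x', P x' * Q1 x' y) (m * Q2 x y)
    (m * ∑ x', P x' * Q2 x' y)
    (mul_nonneg hl.le (h1.1 x y)) (mul_nonneg hl.le (out_nonneg P hP0 h1 y))
    (fun h => by rw [out_zero P hP0 h1 x y ((mul_eq_zero.1 h).resolve_left hl.ne'), mul_zero])
    (mul_nonneg hm.le (h2.1 x y)) (mul_nonneg hm.le (out_nonneg P hP0 h2 y))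
    (fun h => by rw [out_zero P hP0 h2 x y ((mul_eq_zero.1 h).resolve_left hm.ne'), mul_zero])
  rw [mul_div_mul_left _ _ hl.ne', mul_div_mul_left _ _ hm.ne'] at k
  have e : ∑ x', P x' * (l * Q1 x' y + m * Q2 x' y)
      = l * ∑ x', P x' * Q1 x' y + m * ∑ x', P x' * Q2 x' y := by
    rw [Finset.mul_sum, Finset.mul_sum, ← Finset.sum_add_distrib]
    exact Finset.sum_congr rfl fun _ _ => by ring
  rw [e]
  have := mul_le_mul_of_nonneg_left k (hP0 x).le
  linarith

noncomputable def Fexp (P : X → ℝ) (W : X → Y → ℝ) (R : ℝ) (V : X → Y → ℝ) (ρ : ℝ) : ℝ :=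
  -∑ x, P x * Real.logb 2 (∑ y, W x y / V x y ^ ρ) + ρ * (entropy2 P - R)

theorem mut_bound (P : X → ℝ) (hP0 : ∀ x, 0 < P x) (hP1 : ∑ x, P x = 1)
    (V : X → Y → ℝ) (hV : ∀ x y, 0 < V x y) (hV1 : ∀ y, ∑ x, V x y = 1)
    {Q : X → Y → ℝ} (h : IsCh Q) :
    (∑ x, P x * ∑ y, Q x y * Real.logb 2 (V x y)) + entropy2 P ≤ mutInfo2 P Q := by
  set q : Y → ℝ := fun y => ∑ x', P x' * Q x' y with hq
  have hq0 : ∀ y, 0 ≤ q y := out_nonneg P hP0 h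
  have tot : ∑ x, ∑ y, P x * Q x y = 1 := by
    simp only [← Finset.mul_sum, h.2, mul_one, hP1]
  have tot2 : ∑ x, ∑ y, V x y * q y = 1 := by
    rw [Finset.sum_comm]
    simp only [← Finset.sum_mul, hV1, one_mul]
    rw [hq, Finset.sum_comm]; exact tot
  have k : ∑ x, ∑ y, (P x * Q x y - 1 * (V x y * q y)) / Real.log 2 ≤
      ∑ x, ∑ y, (P x * Q x y * Real.logb 2 (Q x y / q y) + P x * Real.logb 2 (P x) * Q x y
        - P x * (Q x y * Real.logb 2 (V x y))) := by
    refine Finset.sum_le_sum fun x _ => Finset.sum_le_sum fun y _ => ?_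
    have k := key_pt (P x * Q x y) (V x y * q y) 1 (mul_nonneg (hP0 x).le (h.1 x y))
      (mul_nonneg (hV x y).le (hq0 y)) (fun h0 => by
        rw [out_zero P hP0 h x y ((mul_eq_zero.1 h0).resolve_left (hV x y).ne'), mul_zero]) one_pos
    rw [Real.logb_one, mul_zero, zero_add] at k
    refine k.trans (le_of_eq ?_)
    rcases (h.1 x y).eq_or_lt with h0 | h0
    · simp [← h0]
    · have hqy : 0 < q y := lt_of_le_of_ne (hq0 y) (fun e => h0.ne' (out_zero P hP0 h x y e.symm))
      have := hP0 x
      have := hV x y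
      rw [Real.logb_div (by positivity) (by positivity), Real.logb_mul (by positivity) (by positivity),
        Real.logb_mul (by positivity) (by positivity), Real.logb_div (by positivity) (by positivity)]
      ring
  simp only [one_mul, ← Finset.sum_div, Finset.sum_sub_distrib, Finset.sum_add_distrib, tot, tot2,
    sub_self, zero_div] at k
  simp only [← Finset.mul_sum, h.2, mul_one] at k
  unfold entropy2 mutInfo2
  change _ ≤ ∑ x, ∑ y, P x * Q x y * Real.logb 2 (Q x y / q y)
  linarith

theorem F_bound (P : X → ℝ) (hP0 : ∀ x, 0 < P x) (hP1 : ∑ x, P x = 1)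
    (W : X → Y → ℝ) (hW : ∀ x y, 0 < W x y) [Nonempty Y]
    (R : ℝ) (V : X → Y → ℝ) (hV : ∀ x y, 0 < V x y) (hV1 : ∀ y, ∑ x, V x y = 1)
    {Q : X → Y → ℝ} (h : IsCh Q) (ρ : ℝ) (hρ : 0 ≤ ρ) :
    Fexp P W R V ρ ≤ condDiv2 P Q W + ρ * (mutInfo2 P Q - R) := by
  have hm := mul_le_mul_of_nonneg_left (mut_bound P hP0 hP1 V hV hV1 h) hρ
  have hx : ∀ x, -Real.logb 2 (∑ y, W x y / V x y ^ ρ) ≤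
      (∑ y, Q x y * Real.logb 2 (Q x y / W x y)) + ρ * ∑ y, Q x y * Real.logb 2 (V x y) := by
    intro x
    have hb : ∀ y, 0 < W x y / V x y ^ ρ := fun y =>
      div_pos (hW x y) (Real.rpow_pos_of_pos (hV x y) _)
    set T := ∑ y, W x y / V x y ^ ρ with hT
    have hTp : 0 < T := Finset.sum_pos (fun y _ => hb y) Finset.univ_nonempty
    have k : ∑ y, (Q x y * Real.logb 2 T⁻¹ + (Q x y - T⁻¹ * (W x y / V x y ^ ρ)) / Real.log 2) ≤
        ∑ y, (Q x y * Real.logb 2 (Q x y / W x y) + ρ * (Q x y * Real.logb 2 (V x y))) := by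
      refine Finset.sum_le_sum fun y _ => ?_
      refine (key_pt _ _ T⁻¹ (h.1 x y) (hb y).le (fun h => absurd h (hb y).ne')
        (inv_pos.2 hTp)).trans (le_of_eq ?_)
      rcases (h.1 x y).eq_or_lt with h0 | h0
      · simp [← h0]
      · have := hW x y
        have hv := Real.rpow_pos_of_pos (hV x y) ρ
        rw [Real.logb_div h0.ne' (hb y).ne', Real.logb_div this.ne' hv.ne',
          Real.logb_div h0.ne' this.ne', Real.logb_rpow_eq_mul_logb_of_pos (hV x y)]
        ring
    simp only [Finset.sum_add_distrib, ← Finset.sum_div, Finset.sum_sub_distrib, ← Finset.mul_sum,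
      ← Finset.sum_mul, h.2, ← hT, inv_mul_cancel₀ hTp.ne', sub_self, zero_div, one_mul,
      Real.logb_inv, add_zero] at k
    exact k
  have hs : ∑ x, P x * -Real.logb 2 (∑ y, W x y / V x y ^ ρ) ≤ ∑ x, P x *
      ((∑ y, Q x y * Real.logb 2 (Q x y / W x y)) + ρ * ∑ y, Q x y * Real.logb 2 (V x y)) :=
    Finset.sum_le_sum fun x _ => mul_le_mul_of_nonneg_left (hx x) (hP0 x).le
  have e : ∑ x, P x * (ρ * ∑ y, Q x y * Real.logb 2 (V x y)) =
      ρ * ∑ x, P x * ∑ y, Q x y * Real.logb 2 (V x y) := by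
    rw [Finset.mul_sum]; exact Finset.sum_congr rfl fun _ _ => by ring
  simp only [mul_add, Finset.sum_add_distrib, e, mul_neg, Finset.sum_neg_distrib] at hs
  unfold Fexp condDiv2
  linarith

theorem F_bound' (P : X → ℝ) (hP0 : ∀ x, 0 < P x) (hP1 : ∑ x, P x = 1)
    (W : X → Y → ℝ) (hW : ∀ x y, 0 < W x y) [Nonempty Y]
    (R : ℝ) (V : X → Y → ℝ) (hV : ∀ x y, 0 < V x y) (hV1 : ∀ y, ∑ x, V x y = 1)
    {Q : X → Y → ℝ} (h : IsCh Q) (ρ : ℝ) (hρ : ρ ∈ Set.Icc (0:ℝ) 1) :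
    Fexp P W R V ρ ≤ condDiv2 P Q W + max (mutInfo2 P Q - R) 0 := by
  refine (F_bound P hP0 hP1 W hW R V hV hV1 h ρ hρ.1).trans ?_
  have h1 := le_max_left (mutInfo2 P Q - R) 0
  have h2 := le_max_right (mutInfo2 P Q - R) 0
  nlinarith [hρ.1, hρ.2]

theorem Utheta_pos [Nonempty X] (U : X → Y → ℝ) (hU : ∀ x y, 0 < U x y) (θ : ℝ) (x : X) (y : Y) :
    0 < Utheta U θ x y :=
  div_pos (Real.rpow_pos_of_pos (hU x y) _)
    (Finset.sum_pos (fun x _ => Real.rpow_pos_of_pos (hU x y) _) Finset.univ_nonempty)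

theorem Utheta_sum [Nonempty X] (U : X → Y → ℝ) (hU : ∀ x y, 0 < U x y) (θ : ℝ) (y : Y) :
    ∑ x, Utheta U θ x y = 1 := by
  unfold Utheta
  rw [← Finset.sum_div]
  exact div_self (Finset.sum_pos (fun x _ => Real.rpow_pos_of_pos (hU x y) _)
    Finset.univ_nonempty).ne'

theorem Uopt_pos [Nonempty X] (P : X → ℝ) (hP0 : ∀ x, 0 < P x)
    (W : X → Y → ℝ) (hW : ∀ x y, 0 < W x y) (Z : X → ℝ) (hZ : ∀ x, 0 < Z x) (ρ : ℝ) (x : X) (y : Y) :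
    0 < Uopt P W Z ρ x y := by
  have h : ∀ x, 0 < P x * W x y ^ (1 / (1 + ρ)) / Z x := fun x =>
    div_pos (mul_pos (hP0 x) (Real.rpow_pos_of_pos (hW x y) _)) (hZ x)
  exact div_pos (h x) (Finset.sum_pos (fun x _ => h x) Finset.univ_nonempty)

theorem Uopt_one [Nonempty X] (P : X → ℝ) (hP0 : ∀ x, 0 < P x)
    (W : X → Y → ℝ) (hW : ∀ x y, 0 < W x y) (Z : X → ℝ) (hZ : ∀ x, 0 < Z x) (ρ : ℝ) (x : X) (y : Y) :
    Utheta (fun x y => Uopt P W Z ρ x y) 1 x y = Uopt P W Z ρ x y := by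
  have h : ∀ x, 0 < P x * W x y ^ (1 / (1 + ρ)) / Z x := fun x =>
    div_pos (mul_pos (hP0 x) (Real.rpow_pos_of_pos (hW x y) _)) (hZ x)
  have : ∑ x, Uopt P W Z ρ x y = 1 := by
    unfold Uopt
    rw [← Finset.sum_div]
    exact div_self (Finset.sum_pos (fun x _ => h x) Finset.univ_nonempty).ne'
  simp only [Utheta, Real.rpow_one, this, div_one]

theorem F_eq [Nonempty X] (P : X → ℝ) (hP0 : ∀ x, 0 < P x)
    (W : X → Y → ℝ) (hW : ∀ x y, 0 < W x y) (R : ℝ) (Z : X → ℝ) (hZ : ∀ x, 0 < Z x) (ρ : ℝ)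
    (hρ : 0 ≤ ρ)
    (hfix : ∀ x, Z x = ∑ y, W x y ^ (1 / (1 + ρ)) *
        (∑ x', P x' * W x' y ^ (1 / (1 + ρ)) / Z x') ^ ρ) :
    ∃ Q : X → Y → ℝ, IsCh Q ∧
      Fexp P W R (fun x y => Uopt P W Z ρ x y) ρ = condDiv2 P Q W + ρ * (mutInfo2 P Q - R) := by
  set S : Y → ℝ := fun y => ∑ x', P x' * W x' y ^ (1 / (1 + ρ)) / Z x' with hS
  have hterm : ∀ x y, 0 < P x * W x y ^ (1 / (1 + ρ)) / Z x := fun x y =>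
    div_pos (mul_pos (hP0 x) (Real.rpow_pos_of_pos (hW x y) _)) (hZ x)
  have hSp : ∀ y, 0 < S y := fun y =>
    Finset.sum_pos (fun x _ => hterm x y) Finset.univ_nonempty
  have hw : ∀ x y, 0 < W x y ^ (1 / (1 + ρ)) := fun x y => Real.rpow_pos_of_pos (hW x y) _
  have hsr : ∀ y, 0 < S y ^ ρ := fun y => Real.rpow_pos_of_pos (hSp y) _
  have hr : (1 + ρ) ≠ 0 := by positivity
  set Q : X → Y → ℝ := fun x y => W x y ^ (1 / (1 + ρ)) * S y ^ ρ / Z x with hQ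
  have hQp : ∀ x y, 0 < Q x y := fun x y => div_pos (mul_pos (hw x y) (hsr y)) (hZ x)
  have hQ1 : ∀ x, ∑ y, Q x y = 1 := fun x => by
    rw [hQ, ← Finset.sum_div, ← hfix x, div_self (hZ x).ne']
  refine ⟨Q, ⟨fun x y => (hQp x y).le, hQ1⟩, ?_⟩
  have hout : ∀ y, ∑ x', P x' * Q x' y = S y * S y ^ ρ := fun y => by
    rw [hS, Finset.sum_mul]
    exact Finset.sum_congr rfl fun x _ => by simp only [hQ, hS]; ring
  have lS : ∀ y, Real.logb 2 (S y ^ ρ) = ρ * Real.logb 2 (S y) := fun y =>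
    Real.logb_rpow_eq_mul_logb_of_pos (hSp y)
  have lw : ∀ x y, Real.logb 2 (W x y ^ (1 / (1 + ρ))) = 1 / (1 + ρ) * Real.logb 2 (W x y) :=
    fun x y => Real.logb_rpow_eq_mul_logb_of_pos (hW x y)
  have lQ : ∀ x y, Real.logb 2 (Q x y) =
      1 / (1 + ρ) * Real.logb 2 (W x y) + ρ * Real.logb 2 (S y) - Real.logb 2 (Z x) := by
    intro x y
    rw [hQ]
    rw [Real.logb_div (mul_pos (hw x y) (hsr y)).ne' (hZ x).ne',
      Real.logb_mul (hw x y).ne' (hsr y).ne', lS, lw]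
  have hD : condDiv2 P Q W + ρ * mutInfo2 P Q = ∑ x, P x * (-(1 + ρ) * Real.logb 2 (Z x)) := by
    unfold condDiv2 mutInfo2
    rw [Finset.mul_sum, ← Finset.sum_add_distrib]
    refine Finset.sum_congr rfl fun x _ => ?_
    rw [Finset.mul_sum, Finset.mul_sum, ← Finset.sum_add_distrib]
    have : ∀ y, P x * (Q x y * Real.logb 2 (Q x y / W x y)) +
        ρ * (P x * Q x y * Real.logb 2 (Q x y / ∑ x', P x' * Q x' y)) =
        P x * (-(1 + ρ) * Real.logb 2 (Z x)) * Q x y := by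
      intro y
      rw [hout, Real.logb_div (hQp x y).ne' (hW x y).ne',
        Real.logb_div (hQp x y).ne' (mul_pos (hSp y) (hsr y)).ne',
        Real.logb_mul (hSp y).ne' (hsr y).ne', lS, lQ]
      field_simp
      ring
    rw [Finset.sum_congr rfl fun y _ => this y, ← Finset.mul_sum, hQ1, mul_one]
  have hT : ∀ x, ∑ y, W x y / Uopt P W Z ρ x y ^ ρ = Z x ^ ρ / P x ^ ρ * Z x := by
    intro x
    nth_rw 2 [hfix x]
    rw [Finset.mul_sum]
    refine Finset.sum_congr rfl fun y _ => ?_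
    have e : Uopt P W Z ρ x y ^ ρ =
        P x ^ ρ * (W x y ^ (1 / (1 + ρ))) ^ ρ / Z x ^ ρ / S y ^ ρ := by
      unfold Uopt
      rw [Real.div_rpow (hterm x y).le (hSp y).le,
        Real.div_rpow (mul_pos (hP0 x) (hw x y)).le (hZ x).le,
        Real.mul_rpow (hP0 x).le (hw x y).le]
    have eW : W x y = W x y ^ (1 / (1 + ρ)) * (W x y ^ (1 / (1 + ρ))) ^ ρ := by
      rw [← Real.rpow_mul (hW x y).le, ← Real.rpow_add (hW x y)]
      have : 1 / (1 + ρ) + 1 / (1 + ρ) * ρ = 1 := by field_simp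
      rw [this, Real.rpow_one]
    rw [e]
    have p1 := Real.rpow_pos_of_pos (hP0 x) ρ
    have p2 := Real.rpow_pos_of_pos (hw x y) ρ
    have p3 := Real.rpow_pos_of_pos (hZ x) ρ
    have p4 := hsr y
    have p5 := hw x y
    nth_rw 1 [eW]
    change _ = _ * (_ * S y ^ ρ)
    generalize P x ^ ρ = a at *
    generalize (W x y ^ (1 / (1 + ρ))) ^ ρ = b at *
    generalize Z x ^ ρ = c at *
    generalize S y ^ ρ = d at *
    field_simp
  have hF : ∀ x, P x * Real.logb 2 (∑ y, W x y / Uopt P W Z ρ x y ^ ρ) =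
      -(P x * (-(1 + ρ) * Real.logb 2 (Z x))) - ρ * (P x * Real.logb 2 (P x)) := by
    intro x
    have p1 := Real.rpow_pos_of_pos (hP0 x) ρ
    have p3 := Real.rpow_pos_of_pos (hZ x) ρ
    rw [hT, Real.logb_mul (by positivity) (hZ x).ne', Real.logb_div (by positivity) (by positivity),
      Real.logb_rpow_eq_mul_logb_of_pos (hP0 x), Real.logb_rpow_eq_mul_logb_of_pos (hZ x)]
    ring
  unfold Fexp entropy2
  have e2 : condDiv2 P Q W + ρ * (mutInfo2 P Q - R) =
      condDiv2 P Q W + ρ * mutInfo2 P Q - ρ * R := by ring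
  rw [e2, hD, Finset.sum_congr rfl fun x _ => hF x, Finset.sum_sub_distrib,
    Finset.sum_neg_distrib, ← Finset.mul_sum]
  ring

theorem minimax (P : X → ℝ) (hP0 : ∀ x, 0 < P x)
    (W : X → Y → ℝ) (hW : ∀ x y, 0 < W x y) (hWc : IsCh W) (R v : ℝ)
    (hv : ∀ Q : X → Y → ℝ, IsCh Q → v ≤ condDiv2 P Q W + max (mutInfo2 P Q - R) 0) :
    ∃ ρ ∈ Set.Icc (0:ℝ) 1, ∀ Q : X → Y → ℝ, IsCh Q →
      v ≤ condDiv2 P Q W + ρ * (mutInfo2 P Q - R) := by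
  set A : (X → Y → ℝ) → ℝ := fun Q => condDiv2 P Q W with hA
  set B : (X → Y → ℝ) → ℝ := fun Q => condDiv2 P Q W + (mutInfo2 P Q - R) with hB
  set C : Set (ℝ × ℝ) := {p | ∃ Q, IsCh Q ∧ A Q < p.1 ∧ B Q < p.2} with hC
  have hCo : IsOpen C := by
    have : C = ⋃ Q : {Q : X → Y → ℝ // IsCh Q}, Set.Ioi (A Q.1) ×ˢ Set.Ioi (B Q.1) := by
      ext p
      simp only [hC, Set.mem_setOf_eq, Set.mem_iUnion, Set.mem_prod, Set.mem_Ioi, Subtype.exists, exists_prop]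
    rw [this]
    exact isOpen_iUnion fun Q => isOpen_Ioi.prod isOpen_Ioi
  have hCc : Convex ℝ C := by
    rw [convex_iff_forall_pos]
    rintro p ⟨Q1, h1, a1, b1⟩ p' ⟨Q2, h2, a2, b2⟩ l m hl hm hlm
    refine ⟨_, h1.mix h2 hl.le hm.le hlm, ?_, ?_⟩
    · have := condDiv_convex P hP0 W hW h1 h2 hl hm hlm
      simp only [Prod.fst_add, Prod.smul_fst, smul_eq_mul]
      simp only [hA] at *
      nlinarith
    · have t1 := condDiv_convex P hP0 W hW h1 h2 hl hm hlm
      have t2 := mutInfo_convex P hP0 h1 h2 hl hm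
      simp only [Prod.snd_add, Prod.smul_snd, smul_eq_mul]
      simp only [hB] at *
      have t3 : R = l * R + m * R := by rw [← add_mul, hlm, one_mul]
      nlinarith
  have hvC : (v, v) ∉ C := by
    rintro ⟨Q, hQ, a, b⟩
    have := hv Q hQ
    simp only [hA, hB] at a b
    rcases max_cases (mutInfo2 P Q - R) 0 with ⟨h, _⟩ | ⟨h, _⟩ <;> rw [h] at this <;> linarith
  obtain ⟨f, hf⟩ := geometric_hahn_banach_point_open hCc hCo hvC
  set s := f (1, 0) with hs
  set t := f (0, 1) with ht
  have hfe : ∀ a b : ℝ, f (a, b) = a * s + b * t := by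
    intro a b
    have : ((a, b) : ℝ × ℝ) = a • ((1:ℝ), (0:ℝ)) + b • ((0:ℝ), (1:ℝ)) := by simp
    rw [this, map_add, map_smul, map_smul, smul_eq_mul, smul_eq_mul]
  have hlt : ∀ Q, IsCh Q → ∀ a b, A Q < a → B Q < b → v * s + v * t < a * s + b * t := by
    intro Q hQ a b ha hb
    have := hf (a, b) ⟨Q, hQ, ha, hb⟩
    rwa [hfe, hfe] at this
  have hs0 : 0 ≤ s := by
    by_contra hneg
    push Not at hneg
    set K := (A W + 1) * s + (B W + 1) * t - (v * s + v * t) with hK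
    have hK0 : 0 < K := by
      have := hlt W hWc (A W + 1) (B W + 1) (by linarith) (by linarith)
      linarith
    have h1 := hlt W hWc (A W + 1 + K / (-s)) (B W + 1)
      (by have : 0 < K / (-s) := div_pos hK0 (by linarith)
          linarith) (by linarith)
    have e : K / (-s) * s = -K := by
      have hne := hneg.ne
      rw [div_neg, neg_mul, div_mul_cancel₀ _ hne]
    nlinarith
  have ht0 : 0 ≤ t := by
    by_contra hneg
    push Not at hneg
    set K := (A W + 1) * s + (B W + 1) * t - (v * s + v * t) with hK
    have hK0 : 0 < K := by
      have := hlt W hWc (A W + 1) (B W + 1) (by linarith) (by linarith)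
      linarith
    have h1 := hlt W hWc (A W + 1) (B W + 1 + K / (-t)) (by linarith)
      (by have : 0 < K / (-t) := div_pos hK0 (by linarith)
          linarith)
    have e : K / (-t) * t = -K := by
      have hne := hneg.ne
      rw [div_neg, neg_mul, div_mul_cancel₀ _ hne]
    nlinarith
  have hst : 0 < s + t := by
    rcases (add_nonneg hs0 ht0).eq_or_lt with h | h
    · have e1 : s = 0 := by linarith
      have e2 : t = 0 := by linarith
      have := hlt W hWc (A W + 1) (B W + 1) (by linarith) (by linarith)
      rw [e1, e2] at this
      simp at this
    · exact h
  refine ⟨t / (s + t), ⟨by positivity, (div_le_one hst).2 (by linarith)⟩, fun Q hQ => ?_⟩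
  refine le_of_forall_pos_le_add fun ε hε => ?_
  have := hlt Q hQ (A Q + ε) (B Q + ε) (by linarith) (by linarith)
  simp only [hA, hB] at this
  have h3 : v * (s + t) ≤ (condDiv2 P Q W + t / (s + t) * (mutInfo2 P Q - R) + ε) * (s + t) := by
    have : (condDiv2 P Q W + t / (s + t) * (mutInfo2 P Q - R) + ε) * (s + t) =
      (condDiv2 P Q W + ε) * (s + t) + t * (mutInfo2 P Q - R) := by field_simp; ring
    rw [this]
    linarith
  exact le_of_mul_le_mul_right h3 hst

end

/-- If for every `ρ ∈ [0,1]` there is a positive solution `Z_ρ` of the fixed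
point equations, then the metric `U_* = U(·|·,ρ*)`, where `ρ*` maximizes the resulting
exponent, achieves the random coding error exponent of constant composition codes:
`max_{ρ∈[0,1]} sup_{θ≥0} { −Σ_x P_X(x) log₂( Σ_y W(y|x)/U_θ(x|y,ρ*)^ρ ) + ρ(H(P_X) − R) }
  = min_Q { D(Q‖W|P_X) + [I_Q(X;Y) − R]_+ }`. -/
theorem optimal_metric_achieves_cc_exponent
    {X Y : Type*} [Fintype X] [Fintype Y] [Nonempty X] [Nonempty Y]
    (P : X → ℝ) (hP0 : ∀ x, 0 < P x) (hP1 : ∑ x, P x = 1)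
    (W : X → Y → ℝ) (hW : ∀ x y, 0 < W x y) (hWsum : ∀ x, ∑ y, W x y = 1)
    (R : ℝ)
    (Z : ℝ → X → ℝ) (hZpos : ∀ ρ ∈ Set.Icc (0:ℝ) 1, ∀ x, 0 < Z ρ x)
    (hZfix : ∀ ρ ∈ Set.Icc (0:ℝ) 1, ∀ x,
      Z ρ x = ∑ y, W x y ^ (1 / (1 + ρ)) *
        (∑ x', P x' * W x' y ^ (1 / (1 + ρ)) / Z ρ x') ^ ρ)
    (ρstar : ℝ) (hρstar : ρstar ∈ Set.Icc (0:ℝ) 1)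
    (hmax : ∀ ρ ∈ Set.Icc (0:ℝ) 1,
      (⨆ θ : Set.Ici (0:ℝ),
        (-∑ x, P x * Real.logb 2
            (∑ y, W x y / Utheta (fun x y => Uopt P W (Z ρ) ρ x y) θ.1 x y ^ ρ)
          + ρ * (entropy2 P - R))) ≤
      ⨆ θ : Set.Ici (0:ℝ),
        (-∑ x, P x * Real.logb 2
            (∑ y, W x y / Utheta (fun x y => Uopt P W (Z ρstar) ρstar x y) θ.1 x y ^ ρstar)
          + ρstar * (entropy2 P - R))) :
    (⨆ ρ : Set.Icc (0:ℝ) 1, ⨆ θ : Set.Ici (0:ℝ),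
        (-∑ x, P x * Real.logb 2
            (∑ y, W x y / Utheta (fun x y => Uopt P W (Z ρstar) ρstar x y) θ.1 x y ^ (ρ.1 : ℝ))
          + ρ.1 * (entropy2 P - R))) =
      ⨅ Q : {Q : X → Y → ℝ // (∀ x y, 0 ≤ Q x y) ∧ ∀ x, ∑ y, Q x y = 1},
        condDiv2 P Q.1 W + max (mutInfo2 P Q.1 - R) 0 := by
  have hWc : IsCh W := ⟨fun x y => (hW x y).le, hWsum⟩
  have hUp : ∀ ρ ∈ Set.Icc (0:ℝ) 1, ∀ x y, 0 < Uopt P W (Z ρ) ρ x y := fun ρ hρ x y =>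
    Uopt_pos P hP0 W hW (Z ρ) (hZpos ρ hρ) ρ x y
  have bound : ∀ σ ∈ Set.Icc (0:ℝ) 1, ∀ ρ ∈ Set.Icc (0:ℝ) 1, ∀ θ : ℝ, ∀ Q : X → Y → ℝ, IsCh Q →
      (-∑ x, P x * Real.logb 2
            (∑ y, W x y / Utheta (fun x y => Uopt P W (Z σ) σ x y) θ x y ^ ρ)
          + ρ * (entropy2 P - R)) ≤ condDiv2 P Q W + max (mutInfo2 P Q - R) 0 := by
    intro σ hσ ρ hρ θ Q hQ
    exact F_bound' P hP0 hP1 W hW R _ (Utheta_pos _ (hUp σ hσ) θ) (Utheta_sum _ (hUp σ hσ) θ) hQ ρ hρ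
  haveI : Nonempty {Q : X → Y → ℝ // (∀ x y, 0 ≤ Q x y) ∧ ∀ x, ∑ y, Q x y = 1} := ⟨⟨W, hWc⟩⟩
  haveI : Nonempty (Set.Icc (0:ℝ) 1) := ⟨⟨0, by simp⟩⟩
  haveI : Nonempty (Set.Ici (0:ℝ)) := ⟨⟨0, by simp⟩⟩
  apply le_antisymm
  · refine ciSup_le fun ρ => ciSup_le fun θ => le_ciInf fun Q => ?_
    exact bound ρstar hρstar ρ.1 ρ.2 θ.1 Q.1 Q.2
  · obtain ⟨ρ, hρ, h⟩ := minimax P hP0 W hW hWc R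
      (⨅ Q : {Q : X → Y → ℝ // (∀ x y, 0 ≤ Q x y) ∧ ∀ x, ∑ y, Q x y = 1},
        condDiv2 P Q.1 W + max (mutInfo2 P Q.1 - R) 0) (by
        intro Q hQ
        refine ciInf_le ⟨-∑ x, P x * Real.logb 2
            (∑ y, W x y / Utheta (fun x y => Uopt P W (Z ρstar) ρstar x y) 1 x y ^ ρstar)
          + ρstar * (entropy2 P - R), ?_⟩ (⟨Q, hQ⟩ :
          {Q : X → Y → ℝ // (∀ x y, 0 ≤ Q x y) ∧ ∀ x, ∑ y, Q x y = 1})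
        rintro _ ⟨Q', rfl⟩
        exact bound ρstar hρstar ρstar hρstar 1 Q'.1 Q'.2)
    obtain ⟨Q, hQ, e⟩ := F_eq P hP0 W hW R (Z ρ) (hZpos ρ hρ) ρ hρ.1 (hZfix ρ hρ)
    refine (h Q hQ).trans ?_
    rw [← e]
    refine le_trans ?_ ((hmax ρ hρ).trans ?_)
    · refine le_trans (le_of_eq ?_) (le_ciSup (ι := Set.Ici (0:ℝ)) ⟨condDiv2 P W W + max (mutInfo2 P W - R) 0, ?_⟩ ⟨1, by simp⟩)
      · simp only [Fexp, Uopt_one P hP0 W hW (Z ρ) (hZpos ρ hρ)]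
      · rintro _ ⟨θ, rfl⟩
        exact bound ρ hρ ρ hρ θ.1 W hWc
    · refine le_ciSup (f := fun ρ : Set.Icc (0:ℝ) 1 => ⨆ θ : Set.Ici (0:ℝ),
        (-∑ x, P x * Real.logb 2
            (∑ y, W x y / Utheta (fun x y => Uopt P W (Z ρstar) ρstar x y) θ.1 x y ^ (ρ.1 : ℝ))
          + ρ.1 * (entropy2 P - R))) ⟨condDiv2 P W W + max (mutInfo2 P W - R) 0, ?_⟩ ⟨ρstar, hρstar⟩
      rintro _ ⟨ρ', rfl⟩
      exact ciSup_le fun θ => bound ρstar hρstar ρ'.1 ρ'.2 θ.1 W hWc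
end

section
/- Let X and Y be finite nonempty alphabets, P_X a probability mass function on X, W a channel with W(y|x) > 0 for all x, y and Σ_y W(y|x) = 1 for each x, and R ∈ ℝ. Then min over channels Q of { D(Q‖W|P_X) + [ I_Q(X;Y) − R ]_+ } = min over probability mass functions V on Y of max_{ρ∈[0,1]} { −(1+ρ) Σ_x P_X(x) log₂( Σ_y ( W(y|x) V(y)^ρ )^{1/(1+ρ)} ) − ρR }. -/
open Finset in
theorem cc_gibbs {Y : Type*} [Fintype Y] (q a : Y → ℝ) (hq : ∀ y, 0 ≤ q y) (hq1 : ∑ y, q y = 1)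
    (ha : ∀ y, 0 ≤ a y) (hqa : ∀ y, 0 < q y → 0 < a y) :
    -Real.logb 2 (∑ y, a y) ≤ ∑ y, q y * Real.logb 2 (q y / a y) := by
  have hS : 0 < ∑ y, a y := by
    obtain ⟨y, -, hy⟩ : ∃ y ∈ (Finset.univ : Finset Y), 0 < q y := by
      by_contra! h
      have := Finset.sum_nonpos h
      linarith
    exact lt_of_lt_of_le (hqa y hy) (Finset.single_le_sum (fun i _ => ha i) (Finset.mem_univ y))
  set S := ∑ y, a y with hSd
  have h2 : 0 < Real.log 2 := Real.log_pos (by norm_num)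
  have key : ∀ y, q y - a y / S - q y * Real.log S ≤ q y * Real.log (q y / a y) := by
    intro y
    rcases (hq y).eq_or_lt with h | h
    · rw [← h]
      have := div_nonneg (ha y) hS.le
      simp; linarith
    · have hay := hqa y h
      have h1 := Real.log_le_sub_one_of_pos (x := a y / (q y * S)) (by positivity)
      rw [Real.log_div hay.ne' (by positivity), Real.log_mul h.ne' hS.ne'] at h1
      rw [Real.log_div h.ne' hay.ne']
      have h3 := mul_le_mul_of_nonneg_left h1 h.le
      have h4 : q y * (a y / (q y * S) - 1) = a y / S - q y := by field_simp
      rw [h4] at h3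
      nlinarith
  have hs := Finset.sum_le_sum (fun y (_ : y ∈ (Finset.univ : Finset Y)) => key y)
  rw [Finset.sum_sub_distrib, Finset.sum_sub_distrib, ← Finset.sum_mul, ← Finset.sum_div, hq1,
    ← hSd, div_self hS.ne'] at hs
  have e : ∑ y, q y * Real.logb 2 (q y / a y) = (∑ y, q y * Real.log (q y / a y)) / Real.log 2 := by
    rw [Finset.sum_div]; exact Finset.sum_congr rfl fun y _ => by rw [Real.logb, mul_div_assoc]
  rw [e, Real.logb, ← neg_div]
  exact div_le_div_of_nonneg_right (by linarith) h2.le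

theorem cc_pw (q w v a ρ : ℝ) (hq : 0 ≤ q) (hw : 0 < w) (hv : 0 < q → 0 < v) (hρ : 0 ≤ ρ)
    (ha : 0 < q → a = (w * v ^ ρ) ^ (1 / (1 + ρ))) :
    q * Real.logb 2 (q / w) + ρ * (q * Real.logb 2 (q / v)) = (1 + ρ) * (q * Real.logb 2 (q / a)) := by
  rcases hq.eq_or_lt with h | h
  · rw [← h]; simp
  · have hv := hv h
    have hvp : 0 < v ^ ρ := Real.rpow_pos_of_pos hv _
    have hap : 0 < (w * v ^ ρ) ^ (1 / (1 + ρ)) := Real.rpow_pos_of_pos (by positivity) _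
    rw [ha h, Real.logb_div h.ne' hw.ne', Real.logb_div h.ne' hv.ne', Real.logb_div h.ne' hap.ne',
      Real.logb_rpow_eq_mul_logb_of_pos (by positivity), Real.logb_mul hw.ne' hvp.ne',
      Real.logb_rpow_eq_mul_logb_of_pos hv]
    have : (1 + ρ) ≠ 0 := by positivity
    field_simp
    ring

theorem cc_mutInfo_le {X Y : Type*} [Fintype X] [Fintype Y]
    (P : X → ℝ) (hP0 : ∀ x, 0 ≤ P x) (hP1 : ∑ x, P x = 1) (Q : X → Y → ℝ)
    (hQ : ∀ x y, 0 ≤ Q x y) (hQ1 : ∀ x, ∑ y, Q x y = 1) (V : Y → ℝ) (hV : ∀ y, 0 ≤ V y)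
    (hV1 : ∑ y, V y = 1) (hQV : ∀ x y, 0 < Q x y → 0 < V y) :
    mutInfo2 P Q ≤ ∑ x, P x * ∑ y, Q x y * Real.logb 2 (Q x y / V y) := by
  set v : Y → ℝ := fun y => ∑ x, P x * Q x y with hv
  have hv0 : ∀ y, 0 ≤ v y := fun y => Finset.sum_nonneg fun x _ => mul_nonneg (hP0 x) (hQ x y)
  have hv1 : ∑ y, v y = 1 := by
    rw [hv, Finset.sum_comm]
    simp_rw [← Finset.mul_sum, hQ1, mul_one, hP1]
  have hvV : ∀ y, 0 < v y → 0 < V y := by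
    intro y hy
    obtain ⟨x, -, hx⟩ : ∃ x ∈ (Finset.univ : Finset X), 0 < P x * Q x y := by
      by_contra! h
      have := Finset.sum_nonpos h
      simp only [hv] at hy
      linarith
    exact hQV x y (pos_of_mul_pos_right hx (hP0 x))
  have hg := cc_gibbs v V hv0 hv1 hV hvV
  rw [hV1, Real.logb_one, neg_zero] at hg
  have e : ∑ x, P x * ∑ y, Q x y * Real.logb 2 (Q x y / V y)
      = mutInfo2 P Q + ∑ y, v y * Real.logb 2 (v y / V y) := by
    have : ∑ y, v y * Real.logb 2 (v y / V y) = ∑ x, ∑ y, P x * Q x y * Real.logb 2 (v y / V y) := by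
      rw [Finset.sum_comm]
      exact Finset.sum_congr rfl fun y _ => by rw [← Finset.sum_mul]
    rw [this, mutInfo2, ← Finset.sum_add_distrib]
    refine Finset.sum_congr rfl fun x _ => ?_
    rw [Finset.mul_sum, ← Finset.sum_add_distrib]
    refine Finset.sum_congr rfl fun y _ => ?_
    change _ = P x * Q x y * Real.logb 2 (Q x y / v y) + _
    rcases (mul_nonneg (hP0 x) (hQ x y)).eq_or_lt with h | h
    · rw [← mul_assoc, ← h]; simp
    · have hq : 0 < Q x y := pos_of_mul_pos_right h (hP0 x)
      have hvy : 0 < v y := lt_of_lt_of_le h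
        (Finset.single_le_sum (f := fun x => P x * Q x y)
          (fun i _ => mul_nonneg (hP0 i) (hQ i y)) (Finset.mem_univ x))
      rw [Real.logb_div hq.ne' (hQV x y hq).ne', Real.logb_div hq.ne' hvy.ne',
        Real.logb_div hvy.ne' (hQV x y hq).ne']
      ring
  linarith

theorem cc_dir1 {X Y : Type*} [Fintype X] [Fintype Y]
    (P : X → ℝ) (hP0 : ∀ x, 0 ≤ P x)
    (W : X → Y → ℝ) (hW : ∀ x y, 0 < W x y) (Q : X → Y → ℝ)
    (hQ : ∀ x y, 0 ≤ Q x y) (hQ1 : ∀ x, ∑ y, Q x y = 1) (ρ : ℝ) (hρ : 0 ≤ ρ) :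
    -(1 + ρ) * ∑ x, P x * Real.logb 2
        (∑ y, (W x y * (∑ x', P x' * Q x' y) ^ ρ) ^ (1 / (1 + ρ)))
      ≤ condDiv2 P Q W + ρ * mutInfo2 P Q := by
  set v : Y → ℝ := fun y => ∑ x, P x * Q x y with hv
  have hv0 : ∀ y, 0 ≤ v y := fun y => Finset.sum_nonneg fun x _ => mul_nonneg (hP0 x) (hQ x y)
  rw [condDiv2, mutInfo2, Finset.mul_sum, Finset.mul_sum, ← Finset.sum_add_distrib]
  refine Finset.sum_le_sum fun x _ => ?_
  rcases (hP0 x).eq_or_lt with h | h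
  · rw [← h]; simp
  have hvp : ∀ y, 0 < Q x y → 0 < v y := fun y hy => lt_of_lt_of_le (mul_pos h hy)
        (Finset.single_le_sum (f := fun x => P x * Q x y)
          (fun i _ => mul_nonneg (hP0 i) (hQ i y)) (Finset.mem_univ x))
  have hg := cc_gibbs (Q x) (fun y => (W x y * v y ^ ρ) ^ (1 / (1 + ρ))) (hQ x) (hQ1 x)
    (fun y => Real.rpow_nonneg (mul_nonneg (hW x y).le (Real.rpow_nonneg (hv0 y) _)) _)
    (fun y hy => Real.rpow_pos_of_pos (mul_pos (hW x y) (Real.rpow_pos_of_pos (hvp y hy) _)) _)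
  have e : P x * ∑ y, Q x y * Real.logb 2 (Q x y / W x y)
      + ρ * ∑ y, P x * Q x y * Real.logb 2 (Q x y / v y)
      = P x * ((1 + ρ) * ∑ y, Q x y * Real.logb 2 (Q x y / (W x y * v y ^ ρ) ^ (1 / (1 + ρ)))) := by
    rw [Finset.mul_sum, Finset.mul_sum, Finset.mul_sum, Finset.mul_sum, ← Finset.sum_add_distrib]
    refine Finset.sum_congr rfl fun y _ => ?_
    rw [← cc_pw (Q x y) (W x y) (v y) _ ρ (hQ x y) (hW x y) (hvp y) hρ (fun _ => rfl)]
    ring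
  change _ ≤ P x * ∑ y, Q x y * Real.logb 2 (Q x y / W x y)
      + ρ * ∑ y, P x * Q x y * Real.logb 2 (Q x y / v y)
  rw [e]
  have := mul_le_mul_of_nonneg_left hg (mul_nonneg h.le (by linarith : 0 ≤ 1 + ρ))
  nlinarith

theorem cc_condDiv_nonneg {X Y : Type*} [Fintype X] [Fintype Y]
    (P : X → ℝ) (hP0 : ∀ x, 0 ≤ P x)
    (W : X → Y → ℝ) (hW : ∀ x y, 0 < W x y) (hWsum : ∀ x, ∑ y, W x y = 1) (Q : X → Y → ℝ)
    (hQ : ∀ x y, 0 ≤ Q x y) (hQ1 : ∀ x, ∑ y, Q x y = 1) : 0 ≤ condDiv2 P Q W := by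
  refine Finset.sum_nonneg fun x _ => mul_nonneg (hP0 x) ?_
  have := cc_gibbs (Q x) (W x) (hQ x) (hQ1 x) (fun y => (hW x y).le) (fun y _ => hW x y)
  rwa [hWsum, Real.logb_one, neg_zero] at this

theorem cc_dir2 {X Y : Type*} [Fintype X] [Fintype Y]
    (P : X → ℝ) (hP0 : ∀ x, 0 ≤ P x) (hP1 : ∑ x, P x = 1)
    (W : X → Y → ℝ) (hW : ∀ x y, 0 < W x y)
    (R : ℝ) (V : Y → ℝ) (hV : ∀ y, 0 ≤ V y) (hV1 : ∑ y, V y = 1) :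
    ∃ Q : X → Y → ℝ, (∀ x y, 0 ≤ Q x y) ∧ (∀ x, ∑ y, Q x y = 1) ∧
      condDiv2 P Q W + max (mutInfo2 P Q - R) 0 ≤
        ⨆ ρ : Set.Icc (0:ℝ) 1,
          (-(1 + ρ.1) *
              ∑ x, P x * Real.logb 2
                (∑ y, (W x y * V y ^ (ρ.1 : ℝ)) ^ (1 / (1 + ρ.1)))
            - ρ.1 * R) := by
  obtain ⟨y0, hy0⟩ : ∃ y, 0 < V y := by
    by_contra! h
    have := Finset.sum_nonpos (fun y (_ : y ∈ (Finset.univ : Finset Y)) => h y)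
    linarith
  set A : ℝ → X → Y → ℝ := fun ρ x y => if V y = 0 then 0 else (W x y * V y ^ ρ) ^ (1 / (1 + ρ)) with hA
  have hApos : ∀ ρ x y, 0 < V y → 0 < A ρ x y := by
    intro ρ x y h
    simp only [hA, h.ne', if_false]
    exact Real.rpow_pos_of_pos (mul_pos (hW x y) (Real.rpow_pos_of_pos h _)) _
  have hA0 : ∀ ρ x y, 0 ≤ A ρ x y := by
    intro ρ x y
    rcases (hV y).eq_or_lt with h | h
    · simp [hA, ← h]
    · exact (hApos ρ x y h).le
  set Z : ℝ → X → ℝ := fun ρ x => ∑ y, A ρ x y with hZ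
  have hZpos : ∀ ρ x, 0 < Z ρ x := fun ρ x =>
    lt_of_lt_of_le (hApos ρ x y0 hy0) (Finset.single_le_sum (fun i _ => hA0 ρ x i) (Finset.mem_univ y0))
  set Q : ℝ → X → Y → ℝ := fun ρ x y => A ρ x y / Z ρ x with hQ
  have hQ0 : ∀ ρ x y, 0 ≤ Q ρ x y := fun ρ x y => div_nonneg (hA0 ρ x y) (hZpos ρ x).le
  have hQ1 : ∀ ρ x, ∑ y, Q ρ x y = 1 := fun ρ x => by
    simp only [hQ]; rw [← Finset.sum_div]; exact div_self (hZpos ρ x).ne'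
  have hQV : ∀ ρ x y, 0 < Q ρ x y → 0 < V y := by
    intro ρ x y h
    rcases (hV y).eq_or_lt with h' | h'
    · simp [hQ, hA, ← h'] at h
    · exact h'
  have hAc : ∀ x y, ContinuousOn (fun ρ => A ρ x y) (Set.Icc 0 1) := by
    intro x y
    rcases (hV y).eq_or_lt with h | h
    · simp only [hA, ← h, if_true]; exact continuousOn_const
    · simp only [hA, h.ne', if_false]
      refine ContinuousOn.rpow ?_ ?_ ?_
      · exact continuousOn_const.mul (ContinuousOn.rpow continuousOn_const continuousOn_id
          (fun _ _ => Or.inl h.ne'))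
      · refine ContinuousOn.div continuousOn_const (continuousOn_const.add continuousOn_id) ?_
        intro ρ hρ
        have := hρ.1
        change (1:ℝ) + ρ ≠ 0
        positivity
      · intro ρ _
        exact Or.inl (mul_pos (hW x y) (Real.rpow_pos_of_pos h _)).ne'
  have hZc : ∀ x, ContinuousOn (fun ρ => Z ρ x) (Set.Icc 0 1) := fun x =>
    continuousOn_finsetSum _ fun y _ => hAc x y
  have hQc : ∀ x y, ContinuousOn (fun ρ => Q ρ x y) (Set.Icc 0 1) := fun x y =>
    (hAc x y).div (hZc x) fun ρ _ => (hZpos ρ x).ne'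
  set g : ℝ → ℝ := fun ρ => ∑ x, P x * ∑ y, Q ρ x y * Real.logb 2 (Q ρ x y / V y) with hg
  have hgc : ContinuousOn g (Set.Icc 0 1) := by
    refine continuousOn_finsetSum _ fun x _ => continuousOn_const.mul
      (continuousOn_finsetSum _ fun y _ => ?_)
    rcases (hV y).eq_or_lt with h | h
    · have : ∀ ρ, Q ρ x y = 0 := fun ρ => by simp [hQ, hA, ← h]
      simp only [this, zero_mul]; exact continuousOn_const
    · refine (hQc x y).mul ?_
      simp only [Real.logb]
      refine ContinuousOn.div_const (ContinuousOn.log ((hQc x y).div_const _) ?_) _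
      intro ρ _
      exact (div_pos (div_pos (hApos ρ x y h) (hZpos ρ x)) h).ne'
  set F : ℝ → ℝ := fun ρ => -(1 + ρ) * ∑ x, P x * Real.logb 2 (Z ρ x) - ρ * R with hF
  have hFc : ContinuousOn F (Set.Icc 0 1) := by
    refine ContinuousOn.sub (ContinuousOn.mul (by fun_prop) ?_) (by fun_prop)
    refine continuousOn_finsetSum _ fun x _ => continuousOn_const.mul ?_
    simp only [Real.logb]
    exact ContinuousOn.div_const (ContinuousOn.log (hZc x) fun ρ _ => (hZpos ρ x).ne') _
  have hFid : ∀ ρ, 0 ≤ ρ → condDiv2 P (Q ρ) W + ρ * (g ρ - R) = F ρ := by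
    intro ρ hρ
    have : condDiv2 P (Q ρ) W + ρ * g ρ = -(1 + ρ) * ∑ x, P x * Real.logb 2 (Z ρ x) := by
      simp only [hg]
      rw [condDiv2, Finset.mul_sum, Finset.mul_sum, ← Finset.sum_add_distrib]
      refine Finset.sum_congr rfl fun x _ => ?_
      have e : ∑ y, Q ρ x y * Real.logb 2 (Q ρ x y / W x y)
          + ρ * ∑ y, Q ρ x y * Real.logb 2 (Q ρ x y / V y) = -(1 + ρ) * Real.logb 2 (Z ρ x) := by
        rw [Finset.mul_sum, ← Finset.sum_add_distrib]
        have : ∀ y, Q ρ x y * Real.logb 2 (Q ρ x y / W x y)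
            + ρ * (Q ρ x y * Real.logb 2 (Q ρ x y / V y))
            = Q ρ x y * (-(1 + ρ) * Real.logb 2 (Z ρ x)) := by
          intro y
          rw [cc_pw (Q ρ x y) (W x y) (V y) (A ρ x y) ρ (hQ0 ρ x y) (hW x y) (hQV ρ x y) hρ
            (fun h => by simp only [hA, (hQV ρ x y h).ne', if_false])]
          rcases (hQ0 ρ x y).eq_or_lt with h | h
          · rw [← h]; simp
          · have ha := hApos ρ x y (hQV ρ x y h)
            have : Q ρ x y / A ρ x y = (Z ρ x)⁻¹ := by
              simp only [hQ]
              have := (hZpos ρ x).ne'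
              field_simp
            rw [this, Real.logb_inv]; ring
        rw [Finset.sum_congr rfl fun y _ => this y, ← Finset.sum_mul, hQ1, one_mul]
      linear_combination P x * e
    simp only [hF]
    linarith
  set f : Set.Icc (0:ℝ) 1 → ℝ := fun ρ => (-(1 + ρ.1) *
              ∑ x, P x * Real.logb 2
                (∑ y, (W x y * V y ^ (ρ.1 : ℝ)) ^ (1 / (1 + ρ.1)))
            - ρ.1 * R) with hf
  have hfF : ∀ ρ : Set.Icc (0:ℝ) 1, 0 < ρ.1 → f ρ = F ρ.1 := by
    intro ρ hρ
    simp only [hf, hF, hZ, hA]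
    congr 2
    refine Finset.sum_congr rfl fun x _ => ?_
    congr 2
    refine Finset.sum_congr rfl fun y _ => ?_
    split_ifs with h
    · have : 1 / (1 + ρ.1) ≠ 0 := by positivity
      rw [h, Real.zero_rpow hρ.ne', mul_zero, Real.zero_rpow this]
    · rfl
  have hbdd : BddAbove (Set.range f) := by
    obtain ⟨C, hC⟩ := (isCompact_Icc.image_of_continuousOn hFc).bddAbove
    refine ⟨max C (f ⟨0, by simp⟩), ?_⟩
    rintro _ ⟨ρ, rfl⟩
    rcases ρ.2.1.eq_or_lt with h | h
    · have : ρ = ⟨0, by simp⟩ := Subtype.ext h.symm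
      rw [this]; exact le_max_right _ _
    · rw [hfF ρ h]
      exact le_max_of_le_left (hC ⟨ρ.1, ρ.2, rfl⟩)
  have hFs : ∀ ρ ∈ Set.Ioc (0:ℝ) 1, F ρ ≤ ⨆ ρ, f ρ := by
    intro ρ hρ
    rw [← hfF ⟨ρ, hρ.1.le, hρ.2⟩ hρ.1]
    exact le_ciSup hbdd _
  have hFs' : ∀ ρ ∈ Set.Icc (0:ℝ) 1, F ρ ≤ ⨆ ρ, f ρ := by
    intro ρ hρ
    have hcl : closure (Set.Ioc (0:ℝ) 1) = Set.Icc 0 1 := closure_Ioc (by norm_num)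
    have := ContinuousWithinAt.closure_le (s := Set.Ioc (0:ℝ) 1) (x := ρ) (f := F)
      (g := fun _ => ⨆ ρ, f ρ) (by rw [hcl]; exact hρ)
      ((hFc ρ hρ).mono Set.Ioc_subset_Icc_self) continuousWithinAt_const hFs
    exact this
  have hmi : ∀ ρ, mutInfo2 P (Q ρ) ≤ g ρ := fun ρ =>
    cc_mutInfo_le P hP0 hP1 (Q ρ) (hQ0 ρ) (hQ1 ρ) V hV hV1 (hQV ρ)
  have fin : ∀ ρ ∈ Set.Icc (0:ℝ) 1, max (g ρ - R) 0 ≤ ρ * (g ρ - R) →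
      ∃ Q : X → Y → ℝ, (∀ x y, 0 ≤ Q x y) ∧ (∀ x, ∑ y, Q x y = 1) ∧
      condDiv2 P Q W + max (mutInfo2 P Q - R) 0 ≤ ⨆ ρ, f ρ := by
    intro ρ hρ h
    refine ⟨Q ρ, hQ0 ρ, hQ1 ρ, ?_⟩
    have h1 := hFs' ρ hρ
    rw [← hFid ρ hρ.1] at h1
    have h2 : max (mutInfo2 P (Q ρ) - R) 0 ≤ max (g ρ - R) 0 :=
      max_le_max (by linarith [hmi ρ]) le_rfl
    linarith
  by_cases h1 : R ≤ g 1
  · exact fin 1 (by simp) (by rw [max_eq_left (by linarith)]; linarith)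
  by_cases h0 : g 0 ≤ R
  · exact fin 0 (by simp) (by rw [max_eq_right (by linarith)]; linarith)
  push Not at h0 h1
  obtain ⟨ρ, hρ, he⟩ := intermediate_value_Icc' (by norm_num : (0:ℝ) ≤ 1) hgc ⟨h1.le, h0.le⟩
  exact fin ρ hρ (by rw [he]; simp)

/-- Lagrange-dual (Gallager-style) form of the constant-composition random
coding error exponent:
`min_Q { D(Q‖W|P_X) + [I_Q(X;Y) − R]_+ }
  = min_V max_{ρ∈[0,1]} { −(1+ρ) Σ_x P_X(x) log₂( Σ_y (W(y|x) V(y)^ρ)^{1/(1+ρ)} ) − ρR }`. -/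
theorem cc_exponent_dual_form
    {X Y : Type*} [Fintype X] [Fintype Y] [Nonempty X] [Nonempty Y]
    (P : X → ℝ) (hP0 : ∀ x, 0 ≤ P x) (hP1 : ∑ x, P x = 1)
    (W : X → Y → ℝ) (hW : ∀ x y, 0 < W x y) (hWsum : ∀ x, ∑ y, W x y = 1)
    (R : ℝ) :
    (⨅ Q : {Q : X → Y → ℝ // (∀ x y, 0 ≤ Q x y) ∧ ∀ x, ∑ y, Q x y = 1},
        condDiv2 P Q.1 W + max (mutInfo2 P Q.1 - R) 0) =
      ⨅ V : {V : Y → ℝ // (∀ y, 0 ≤ V y) ∧ ∑ y, V y = 1},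
        ⨆ ρ : Set.Icc (0:ℝ) 1,
          (-(1 + ρ.1) *
              ∑ x, P x * Real.logb 2
                (∑ y, (W x y * V.1 y ^ (ρ.1 : ℝ)) ^ (1 / (1 + ρ.1)))
            - ρ.1 * R) := by
  have key1 : ∀ Q : {Q : X → Y → ℝ // (∀ x y, 0 ≤ Q x y) ∧ ∀ x, ∑ y, Q x y = 1},
      0 ≤ condDiv2 P Q.1 W + max (mutInfo2 P Q.1 - R) 0 := fun Q =>
    add_nonneg (cc_condDiv_nonneg P hP0 W hW hWsum Q.1 Q.2.1 Q.2.2) (le_max_right _ _)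
  have bdL : BddBelow (Set.range fun Q : {Q : X → Y → ℝ // (∀ x y, 0 ≤ Q x y) ∧ ∀ x, ∑ y, Q x y = 1} =>
      condDiv2 P Q.1 W + max (mutInfo2 P Q.1 - R) 0) :=
    ⟨0, by rintro _ ⟨Q, rfl⟩; exact key1 Q⟩
  have : Nonempty {Q : X → Y → ℝ // (∀ x y, 0 ≤ Q x y) ∧ ∀ x, ∑ y, Q x y = 1} :=
    ⟨⟨W, fun x y => (hW x y).le, hWsum⟩⟩
  have : Nonempty {V : Y → ℝ // (∀ y, 0 ≤ V y) ∧ ∑ y, V y = 1} :=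
    ⟨⟨W (Classical.arbitrary X), fun y => (hW _ y).le, hWsum _⟩⟩
  have le2 : ∀ V : {V : Y → ℝ // (∀ y, 0 ≤ V y) ∧ ∑ y, V y = 1},
      (⨅ Q : {Q : X → Y → ℝ // (∀ x y, 0 ≤ Q x y) ∧ ∀ x, ∑ y, Q x y = 1},
        condDiv2 P Q.1 W + max (mutInfo2 P Q.1 - R) 0) ≤ ⨆ ρ : Set.Icc (0:ℝ) 1,
          (-(1 + ρ.1) *
              ∑ x, P x * Real.logb 2
                (∑ y, (W x y * V.1 y ^ (ρ.1 : ℝ)) ^ (1 / (1 + ρ.1)))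
            - ρ.1 * R) := by
    intro V
    obtain ⟨Q, hQ0, hQ1, h⟩ := cc_dir2 P hP0 hP1 W hW R V.1 V.2.1 V.2.2
    exact (ciInf_le bdL ⟨Q, hQ0, hQ1⟩).trans h
  refine le_antisymm (le_ciInf le2) (le_ciInf fun Q => ?_)
  have hV1 : ∑ y, ∑ x, P x * Q.1 x y = 1 := by
    rw [Finset.sum_comm]
    simp_rw [← Finset.mul_sum, Q.2.2, mul_one, hP1]
  refine (ciInf_le ⟨_, by rintro _ ⟨V, rfl⟩; exact le2 V⟩ ⟨fun y => ∑ x, P x * Q.1 x y,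
    fun y => Finset.sum_nonneg fun x _ => mul_nonneg (hP0 x) (Q.2.1 x y), hV1⟩).trans ?_
  have : Nonempty (Set.Icc (0:ℝ) 1) := ⟨⟨0, by simp⟩⟩
  refine ciSup_le fun ρ => ?_
  have h := cc_dir1 P hP0 W hW Q.1 Q.2.1 Q.2.2 ρ.1 ρ.2.1
  have h2 : ρ.1 * (mutInfo2 P Q.1 - R) ≤ max (mutInfo2 P Q.1 - R) 0 := by
    rcases le_total (mutInfo2 P Q.1 - R) 0 with h3 | h3
    · exact le_max_of_le_right (mul_nonpos_of_nonneg_of_nonpos ρ.2.1 h3)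
    · exact le_max_of_le_left (mul_le_of_le_one_left h3 ρ.2.2)
  simp only []
  linarith
end

section
/- Let (Ω, ℱ, P) be a probability space, N ≥ 2 an integer, and A_1, …, A_N events such that P(A_i) = α for every i and P(A_i ∩ A_j) = α² for all i ≠ j, where 0 ≤ α ≤ 1. Then P(A_1 ∪ ⋯ ∪ A_N) ≥ Nα / (1 + (N−1)α) ≥ min{ 1/2, (N−1)α/2 }. -/
open MeasureTheory

/-- de Caen-type lower bound on the probability of a union of `N ≥ 2` events,
each of probability `α`, with pairwise intersections of probability `α²`:
`P(∪ A_i) ≥ Nα/(1+(N−1)α) ≥ min{1/2, (N−1)α/2}`. -/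
theorem deCaen_union_lower_bound
    {Ω : Type*} [MeasurableSpace Ω] (μ : Measure Ω) [IsProbabilityMeasure μ]
    (N : ℕ) (hN : 2 ≤ N) (A : Fin N → Set Ω) (hA : ∀ i, MeasurableSet (A i))
    (α : ℝ) (hα0 : 0 ≤ α) (hα1 : α ≤ 1)
    (hsingle : ∀ i, μ (A i) = ENNReal.ofReal α)
    (hpair : ∀ i j, i ≠ j → μ (A i ∩ A j) = ENNReal.ofReal (α ^ 2)) :
    ENNReal.ofReal ((N : ℝ) * α / (1 + ((N : ℝ) - 1) * α)) ≤ μ (⋃ i, A i) ∧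
    ENNReal.ofReal (min (1 / 2) (((N : ℝ) - 1) * α / 2)) ≤
      ENNReal.ofReal ((N : ℝ) * α / (1 + ((N : ℝ) - 1) * α)) := by
  have hN' : (2 : ℝ) ≤ N := by exact_mod_cast hN
  have hx : 0 ≤ ((N : ℝ) - 1) * α := mul_nonneg (by linarith) hα0
  have hD : 0 < 1 + ((N : ℝ) - 1) * α := by linarith
  constructor
  · have hU : MeasurableSet (⋃ i, A i) := MeasurableSet.iUnion hA
    rw [← ENNReal.ofReal_toReal (measure_ne_top μ (⋃ i, A i))]
    apply ENNReal.ofReal_le_ofReal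
    change _ ≤ μ.real (⋃ i, A i)
    set D := 1 + ((N : ℝ) - 1) * α with hDdef
    set c := D⁻¹ with hc
    have h1 : ∀ i, μ.real (A i) = α := fun i => by
      rw [Measure.real, hsingle, ENNReal.toReal_ofReal hα0]
    have h2 : ∀ i j, μ.real (A i ∩ A j) = if i = j then α else α ^ 2 := fun i j => by
      split_ifs with h
      · subst h
        rw [Set.inter_self, h1]
      · rw [Measure.real, hpair i j h, ENNReal.toReal_ofReal (by positivity)]
    have hint : ∀ s : Set Ω, MeasurableSet s →
        Integrable (s.indicator (fun _ => (1 : ℝ))) μ := fun s hs =>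
      (integrable_const (1 : ℝ)).indicator hs
    have hI1 : Integrable (fun ω => ∑ i, (A i).indicator (fun _ => (1 : ℝ)) ω) μ :=
      integrable_finsetSum _ fun i _ => hint _ (hA i)
    have hI2' : ∀ i, Integrable
        (fun ω => ∑ j, (A i ∩ A j).indicator (fun _ => (1 : ℝ)) ω) μ := fun i =>
      integrable_finsetSum _ fun j _ => hint _ ((hA i).inter (hA j))
    have hI2 : Integrable
        (fun ω => ∑ i, ∑ j, (A i ∩ A j).indicator (fun _ => (1 : ℝ)) ω) μ :=
      integrable_finsetSum _ fun i _ => hI2' i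
    have hE : ∀ s : Set Ω, MeasurableSet s →
        ∫ ω, s.indicator (fun _ => (1 : ℝ)) ω ∂μ = μ.real s := fun s hs => by
      rw [integral_indicator_const _ hs]; simp
    have e1 : ∫ ω, ∑ i, (A i).indicator (fun _ => (1 : ℝ)) ω ∂μ = N * α := by
      rw [integral_finsetSum _ fun i _ => hint _ (hA i)]
      simp [hE _ (hA _), h1]
    have e2 : ∫ ω, ∑ i, ∑ j, (A i ∩ A j).indicator (fun _ => (1 : ℝ)) ω ∂μ = N * α * D := by
      rw [integral_finsetSum _ fun i _ => hI2' i]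
      have : ∀ i, ∫ ω, ∑ j, (A i ∩ A j).indicator (fun _ => (1 : ℝ)) ω ∂μ = α * D := by
        intro i
        rw [integral_finsetSum _ fun j _ => hint _ ((hA i).inter (hA j))]
        have h3 : ∀ j, ∫ ω, (A i ∩ A j).indicator (fun _ => (1 : ℝ)) ω ∂μ
            = α ^ 2 + if i = j then α - α ^ 2 else 0 := fun j => by
          rw [hE _ ((hA i).inter (hA j)), h2]
          split_ifs <;> ring
        simp only [h3, Finset.sum_add_distrib, Finset.sum_ite_eq, Finset.mem_univ, if_true,
          Finset.sum_const, Finset.card_univ, Fintype.card_fin, nsmul_eq_mul]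
        rw [hDdef]; ring
      simp only [this, Finset.sum_const, Finset.card_univ, Fintype.card_fin, nsmul_eq_mul]
      ring
    have key : ∫ ω, (2 * c * (∑ i, (A i).indicator (fun _ => (1 : ℝ)) ω)
        - c ^ 2 * ∑ i, ∑ j, (A i ∩ A j).indicator (fun _ => (1 : ℝ)) ω) ∂μ
        ≤ ∫ ω, (⋃ i, A i).indicator (fun _ => (1 : ℝ)) ω ∂μ := by
      apply integral_mono ((hI1.const_mul _).sub (hI2.const_mul _)) (hint _ hU)
      intro ω
      have hsq : ∑ i, ∑ j, (A i ∩ A j).indicator (fun _ => (1 : ℝ)) ω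
          = (∑ i, (A i).indicator (fun _ => (1 : ℝ)) ω) ^ 2 := by
        rw [sq, Finset.sum_mul_sum]
        refine Finset.sum_congr rfl fun i _ => Finset.sum_congr rfl fun j _ => ?_
        by_cases hi : ω ∈ A i <;> by_cases hj : ω ∈ A j <;> simp [hi, hj]
      simp only [Pi.sub_apply]
      rw [hsq]
      by_cases h : ω ∈ ⋃ i, A i
      · rw [Set.indicator_of_mem h]
        nlinarith [sq_nonneg (1 - c * ∑ i, (A i).indicator (fun _ => (1 : ℝ)) ω)]
      · rw [Set.indicator_of_notMem h]
        have h0 : ∀ i, (A i).indicator (fun _ => (1 : ℝ)) ω = 0 := fun i =>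
          Set.indicator_of_notMem (fun hi => h (Set.mem_iUnion.2 ⟨i, hi⟩)) _
        simp [h0]
    rw [integral_sub (hI1.const_mul _) (hI2.const_mul _), integral_const_mul,
      integral_const_mul, e1, e2, hE _ hU] at key
    have hcD : c * D = 1 := inv_mul_cancel₀ hD.ne'
    have : 2 * c * (N * α) - c ^ 2 * (N * α * D) = N * α / D := by
      rw [div_eq_mul_inv, ← hc]
      linear_combination (-(c * N * α)) * hcD
    linarith
  · apply ENNReal.ofReal_le_ofReal
    rw [le_div_iff₀ hD]
    rcases le_total (((N : ℝ) - 1) * α) 1 with h | h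
    · have := min_le_right (1 / 2 : ℝ) (((N : ℝ) - 1) * α / 2)
      nlinarith [mul_le_mul_of_nonneg_right this hD.le]
    · have := min_le_left (1 / 2 : ℝ) (((N : ℝ) - 1) * α / 2)
      nlinarith [mul_le_mul_of_nonneg_right this hD.le]
end
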